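/- Let Ω ⊂ ℝ² be a bounded, open, connected set with Lipschitz boundary and let u ∈ W^{1,1}(Ω;S¹) be such that ⟨Det(∇u),φ⟩ = π Σ_{i=1}^∞ (φ(x_i) − φ(y_i)) for all φ ∈ Lip₀(Ω), where x_i, y_i ∈ cl(Ω), x_i ≠ y_i and Σ_{i=1}^∞ |x_i − y_i| < +∞. Then for every ε > 0 there exist u_ε ∈ W^{1,1}(Ω;S¹) and N_ε ∈ ℕ such that: (i) ⟨Det(∇u_ε),φ⟩ = π Σ_{i=1}^{N_ε} (φ(x_i) − φ(y_i)) for all φ ∈ Lip₀(Ω); (ii) ‖u − u_ε‖_{W^{1,1}} + ‖Det(∇u) − Det(∇u_ε)‖_flat < ε. -/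

import Mathlib

open MeasureTheory Metric Filter Set
open scoped ENNReal NNReal Topology Classical

noncomputable section

abbrev R2 := EuclideanSpace ℝ (Fin 2)

/-- `Ω ⊂ ℝ²` has Lipschitz boundary: near every boundary point, after a rigid motion,
`Ω` coincides with the open region strictly above the graph of a Lipschitz function. -/
def HasLipschitzBoundary (Ω : Set R2) : Prop :=
  ∀ p ∈ frontier Ω, ∃ r : ℝ, 0 < r ∧ ∃ (f : R2 ≃ᵢ R2) (γ : ℝ → ℝ) (L : ℝ≥0),
    LipschitzWith L γ ∧ ∀ x ∈ Metric.ball p r, (x ∈ Ω ↔ γ (f x 0) < f x 1)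

/-- `G` is the weak (distributional) gradient of `u` on `Ω`:
`∫_Ω u_i ∂_j φ = -∫_Ω G_{ij} φ` for all test functions `φ ∈ C_c^∞(Ω)`. -/
def IsWeakGradient (Ω : Set R2) (u : R2 → R2) (G : R2 → Matrix (Fin 2) (Fin 2) ℝ) : Prop :=
  ∀ φ : R2 → ℝ, ContDiff ℝ (⊤ : ℕ∞) φ → HasCompactSupport φ → tsupport φ ⊆ Ω →
    ∀ i j : Fin 2,
      (∫ x in Ω, u x i * fderiv ℝ φ x (EuclideanSpace.single j 1)) =
        - ∫ x in Ω, G x i j * φ x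

/-- `u ∈ W^{1,1}(Ω;ℝ²)` with weak gradient `G`. -/
def MemW11 (Ω : Set R2) (u : R2 → R2) (G : R2 → Matrix (Fin 2) (Fin 2) ℝ) : Prop :=
  IntegrableOn u Ω ∧ (∀ i j : Fin 2, IntegrableOn (fun x => G x i j) Ω) ∧
    IsWeakGradient Ω u G

/-- `|u| = 1` a.e. in `Ω`. -/
def SphereValued (Ω : Set R2) (u : R2 → R2) : Prop :=
  ∀ᵐ x ∂(volume.restrict Ω), ‖u x‖ = 1

/-- Frobenius norm of a `2×2` matrix. -/
def frob (M : Matrix (Fin 2) (Fin 2) ℝ) : ℝ :=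
  Real.sqrt (∑ i, ∑ j, (M i j) ^ 2)

/-- Jacobian matrix of a map `v : ℝ² → ℝ²`. -/
def jacobianMatrix (v : R2 → R2) (x : R2) : Matrix (Fin 2) (Fin 2) ℝ :=
  Matrix.of fun i j => fderiv ℝ v x (EuclideanSpace.single j 1) i

/-- Classical graph area `A(v,A) = ∫_A √(1 + |∇v|² + (Jv)²)` of a `C¹` map. -/
def classicalArea (A : Set R2) (v : R2 → R2) : ℝ≥0∞ :=
  ∫⁻ x in A, ENNReal.ofReal
    (Real.sqrt (1 + (∑ i, ∑ j, (jacobianMatrix v x i j) ^ 2) + (jacobianMatrix v x).det ^ 2))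

/-- `L¹`-relaxed area functional `𝒜(u,A)`. -/
def relaxedArea (u : R2 → R2) (A : Set R2) : ℝ≥0∞ :=
  sInf { a : ℝ≥0∞ | ∃ v : ℕ → R2 → R2,
    (∀ k, ContDiffOn ℝ 1 (v k) A) ∧
    (∀ k, IntegrableOn (fun x => v k x - u x) A) ∧
    Tendsto (fun k => ∫ x in A, ‖v k x - u x‖) atTop (nhds 0) ∧
    a = Filter.liminf (fun k => classicalArea A (v k)) atTop }

/-- `λ_u = (1/2)(u₁ ∇^⊥u₂ − u₂ ∇^⊥u₁)`, computed from the weak gradient `G`. -/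
def lambdaVec (u : R2 → R2) (G : R2 → Matrix (Fin 2) (Fin 2) ℝ) (x : R2) : Fin 2 → ℝ :=
  ![ (1 / 2) * (-(u x 0) * G x 1 1 + u x 1 * G x 0 1),
     (1 / 2) * (u x 0 * G x 1 0 - u x 1 * G x 0 0) ]

/-- Distributional Jacobian pairing `⟨Det(∇u), φ⟩ = ∫_Ω λ_u · ∇φ`. -/
def detPairing (Ω : Set R2) (u : R2 → R2) (G : R2 → Matrix (Fin 2) (Fin 2) ℝ)
    (φ : R2 → ℝ) : ℝ :=
  ∫ x in Ω, ∑ j, lambdaVec u G x j * fderiv ℝ φ x (EuclideanSpace.single j 1)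

/-- `φ ∈ Lip₀(Ω)`: Lipschitz on `cl(Ω)` and vanishing on `∂Ω`. -/
def MemLip0 (Ω : Set R2) (φ : R2 → ℝ) : Prop :=
  (∃ L : ℝ≥0, LipschitzOnWith L φ (closure Ω)) ∧ ∀ p ∈ frontier Ω, φ p = 0

/-- Admissible test functions for the flat norm: Lipschitz constant `≤ L` on `cl(Ω)`,
vanishing on `Z`, and bounded by `1` on `cl(Ω)`. -/
def FlatAdmissible (Ω Z : Set R2) (L : ℝ≥0) (φ : R2 → ℝ) : Prop :=
  LipschitzOnWith L φ (closure Ω) ∧ (∀ p ∈ Z, φ p = 0) ∧ ∀ p ∈ closure Ω, |φ p| ≤ 1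

/-- Flat norm of a functional `F`, with vanishing condition on the set `Z`. -/
def flatNormOn (Ω Z : Set R2) (L : ℝ≥0) (F : (R2 → ℝ) → ℝ) : ℝ≥0∞ :=
  ⨆ φ ∈ {φ : R2 → ℝ | FlatAdmissible Ω Z L φ}, ENNReal.ofReal (F φ)

/-- Flat norm of a functional `F` on `Lip₀(Ω)`; `L = 2` gives `‖·‖_{flat,α}` (α = 1/2),
`L = 1` gives `‖·‖_flat`. -/
def flatNorm (Ω : Set R2) (L : ℝ≥0) (F : (R2 → ℝ) → ℝ) : ℝ≥0∞ :=
  flatNormOn Ω (frontier Ω) L F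

/-- `d̄_Ω(x,y) = min{|x−y|, dist(x,∂Ω) + dist(y,∂Ω)}`. -/
def dbar (Ω : Set R2) (x y : R2) : ℝ :=
  min (dist x y) (Metric.infDist x (frontier Ω) + Metric.infDist y (frontier Ω))

/-- Countably subadditive interior envelope `𝒜**(u,V)` (relative to `Ω`). -/
def envA (u : R2 → R2) (Ω V : Set R2) : ℝ≥0∞ :=
  sInf { a : ℝ≥0∞ | ∃ A : ℕ → Set R2,
    (∀ k, IsOpen (A k) ∧ A k ⊆ Ω) ∧ V ⊆ ⋃ k, A k ∧ a = ∑' k, relaxedArea u (A k) }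

/-- Property `(P_f)` for a finite family of pairs of points of `cl(Ω)`. -/
def SatisfiesPf (Ω : Set R2) {n : ℕ} (x y : Fin n → R2) : Prop :=
  (∀ k, (x k ∈ Ω ∧ y k ∈ frontier Ω ∧ dist (x k) (y k) = Metric.infDist (x k) (frontier Ω)) ∨
        (y k ∈ Ω ∧ x k ∈ frontier Ω ∧ dist (x k) (y k) = Metric.infDist (y k) (frontier Ω))) ∧
  ∀ i j, x i ∈ Ω → y j ∈ Ω → x i ≠ y j

/-- The points of the family `x, y` lying in `Ω` are distinct and three by three
not collinear. -/
def InteriorPointsGeneric (Ω : Set R2) {n : ℕ} (x y : Fin n → R2) : Prop :=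
  (∀ a b : Fin n ⊕ Fin n, Sum.elim x y a ∈ Ω → Sum.elim x y b ∈ Ω → a ≠ b →
    Sum.elim x y a ≠ Sum.elim x y b) ∧
  ∀ a b c : Fin n ⊕ Fin n, Sum.elim x y a ∈ Ω → Sum.elim x y b ∈ Ω → Sum.elim x y c ∈ Ω →
    a ≠ b → a ≠ c → b ≠ c →
    ¬ Collinear ℝ ({Sum.elim x y a, Sum.elim x y b, Sum.elim x y c} : Set R2)

/-- `ι(w₁,w₂) = (w₁,−w₂)`. -/
def conjPt (w : R2) : R2 := (WithLp.equiv 2 (Fin 2 → ℝ)).symm ![w 0, -(w 1)]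

/-- `u` is a (positive/negative) vortex around the points of the family lying in `Ω`:
the closed discs of radii `ρ` are contained in `Ω` and pairwise disjoint,
`u(z) = (z−x_i)/|z−x_i|` on `B_{ρ}(x_i)` and `u(z) = ι((z−y_j)/|z−y_j|)` on `B_{ρ}(y_j)`. -/
def VortexAt (Ω : Set R2) (u : R2 → R2) {n : ℕ} (x y : Fin n → R2)
    (ρ : Fin n ⊕ Fin n → ℝ) : Prop :=
  (∀ a, Sum.elim x y a ∈ Ω → Metric.closedBall (Sum.elim x y a) (ρ a) ⊆ Ω) ∧
  (∀ a b, a ≠ b → Sum.elim x y a ∈ Ω → Sum.elim x y b ∈ Ω →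
    Disjoint (Metric.closedBall (Sum.elim x y a) (ρ a))
      (Metric.closedBall (Sum.elim x y b) (ρ b))) ∧
  (∀ i, x i ∈ Ω → ∀ᵐ z ∂(volume.restrict (Metric.ball (x i) (ρ (Sum.inl i)))),
    u z = ‖z - x i‖⁻¹ • (z - x i)) ∧
  (∀ i, y i ∈ Ω → ∀ᵐ z ∂(volume.restrict (Metric.ball (y i) (ρ (Sum.inr i)))),
    u z = conjPt (‖z - y i‖⁻¹ • (z - y i)))

/-- The energy `E(I_P, I_D, τ)` of a partition `{I_Dᶜ, I_D}` of `I` and an injection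
`τ : I_D → I`. -/
def energy (Ω : Set R2) {n : ℕ} (x y : Fin n → R2) (ID : Finset (Fin n))
    (τ : Fin n → Fin n) : ℝ≥0∞ :=
  ((IDᶜ.filter fun k => x k ∈ Ω).card : ℝ≥0∞) +
  (((Finset.univ \ ID.image τ).filter fun j => y j ∈ Ω).card : ℝ≥0∞) +
  2 * ∑ k ∈ ID, μH[1] (segment ℝ (y (τ k)) (x k) ∩ Ω)

/-!
Write `u` as a complex-valued map. A pair `x, y` carries a dipole: a map `w` with values in `S¹`,
vortices of degrees `1` at `x` and `-1` at `y`, equal to `1` off a disc around `y` whose radius is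
a fixed multiple of `|x - y|`, and with current `a = Im (w̄ dw)` of `L¹` norm `≲ |x - y|`.
Multiplying `u` by a map `w` with values in `S¹` adds the current of `w` to that of `u`, and
`⟨Det(∇u), φ⟩ = (1/2) ∫ a_u ∧ dφ` is linear in the current `a_u`, so multiplication by the dipole
of `y, x` removes the term `π (φ(x) - φ(y))` from `Det(∇u)`.

Let `u_N` be the product of `u` with the dipoles of all the pairs `y_i, x_i`, `i ≥ N`. Since
`∑ |x_i - y_i| < ∞`, by Borel–Cantelli almost every point meets finitely many of the discs, so the
infinite product is a.e. finite, the currents are summable in `L¹`, and `u_N → u` in `W^{1,1}` by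
dominated convergence. What remains of `Det(∇u_N)` is the sum over `i < N`, and
`‖Det(∇u) - Det(∇u_N)‖_flat ≤ π ∑_{i ≥ N} |x_i - y_i|`.
-/

/-! ### Weak derivatives -/

section WeakDerivative

variable {E F F' : Type*} [NormedAddCommGroup E] [NormedSpace ℝ E] [MeasureSpace E]
  [BorelSpace E] [NormedAddCommGroup F] [NormedSpace ℝ F]
  [NormedAddCommGroup F'] [NormedSpace ℝ F'] {Ω : Set E}

/-- `V` is the weak (distributional) Fréchet derivative of `v` on `Ω`, tested against scalar
functions in `C_c^∞(Ω)`. -/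
def HasWeakFDeriv (Ω : Set E) (v : E → F) (V : E → E →L[ℝ] F) : Prop :=
  ∀ φ : E → ℝ, ContDiff ℝ (⊤ : ℕ∞) φ → HasCompactSupport φ → tsupport φ ⊆ Ω → ∀ e : E,
    ∫ z in Ω, fderiv ℝ φ z e • v z = -∫ z in Ω, φ z • V z e

lemma integrable_smul_clm_apply {φ : E → ℝ} (hφ : Continuous φ) (hφc : HasCompactSupport φ)
    {V : E → E →L[ℝ] F} (hV : LocallyIntegrable V (volume.restrict Ω)) (e : E) :
    IntegrableOn (fun z => φ z • V z e) Ω :=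
  (hV.integrable_smul_left_of_hasCompactSupport hφ hφc).apply_continuousLinearMap e

lemma integrable_fderiv_apply_smul {φ : E → ℝ} (hφ : ContDiff ℝ (⊤ : ℕ∞) φ)
    (hφc : HasCompactSupport φ) {v : E → F} (hv : LocallyIntegrable v (volume.restrict Ω))
    (e : E) : IntegrableOn (fun z => fderiv ℝ φ z e • v z) Ω :=
  hv.integrable_smul_left_of_hasCompactSupport
    ((hφ.continuous_fderiv (by simp)).clm_apply continuous_const) (hφc.fderiv_apply ℝ e)

namespace HasWeakFDeriv

lemma clm_comp [CompleteSpace F] [CompleteSpace F'] {v : E → F} {V : E → E →L[ℝ] F}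
    (hv : HasWeakFDeriv Ω v V) (iv : LocallyIntegrable v (volume.restrict Ω))
    (iV : LocallyIntegrable V (volume.restrict Ω)) (L : F →L[ℝ] F') :
    HasWeakFDeriv Ω (fun z => L (v z)) (fun z => L ∘L V z) := by
  intro φ hφ hφc hφΩ e
  simp only [ContinuousLinearMap.comp_apply, ← ContinuousLinearMap.map_smul L]
  rw [L.integral_comp_comm (integrable_fderiv_apply_smul hφ hφc iv e),
    L.integral_comp_comm (integrable_smul_clm_apply hφ.continuous hφc iV e),
    hv φ hφ hφc hφΩ e, map_neg]

lemma integral_fderiv_mul {v : E → ℂ} {V : E → E →L[ℝ] ℂ} (hv : HasWeakFDeriv Ω v V)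
    (iv : LocallyIntegrable v (volume.restrict Ω)) (iV : LocallyIntegrable V (volume.restrict Ω))
    {ψ : E → ℂ} (hψ : ContDiff ℝ (⊤ : ℕ∞) ψ) (hψc : HasCompactSupport ψ) (hψΩ : tsupport ψ ⊆ Ω)
    (e : E) : ∫ z in Ω, fderiv ℝ ψ z e • v z = -∫ z in Ω, ψ z • V z e := by
  have part : ∀ L : ℂ →L[ℝ] ℝ, ContDiff ℝ (⊤ : ℕ∞) (L ∘ ψ) ∧ HasCompactSupport (L ∘ ψ) ∧
      tsupport (L ∘ ψ) ⊆ Ω ∧ ∀ z, fderiv ℝ (L ∘ ψ) z e = L (fderiv ℝ ψ z e) := fun L =>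
    ⟨L.contDiff.comp hψ, hψc.comp_left L.map_zero,
      (tsupport_comp_subset L.map_zero ψ).trans hψΩ,
      fun z => by
        rw [(L.hasFDerivAt.comp z (hψ.differentiable (by simp) z).hasFDerivAt).fderiv]; rfl⟩
  obtain ⟨hre, hrec, hreΩ, dre⟩ := part Complex.reCLM
  obtain ⟨him, himc, himΩ, dim⟩ := part Complex.imCLM
  have split : ∀ c d : ℂ, c • d = Complex.reCLM c • d + Complex.I * (Complex.imCLM c • d) := by
    intro c d
    nth_rewrite 1 [← Complex.re_add_im c]
    simp only [Complex.reCLM_apply, Complex.imCLM_apply, Complex.real_smul, smul_eq_mul]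
    ring
  simp only [split, ← dre, ← dim, ← Function.comp_apply (f := Complex.reCLM) (g := ψ),
    ← Function.comp_apply (f := Complex.imCLM) (g := ψ)]
  rw [integral_add (integrable_fderiv_apply_smul hre hrec iv e)
      ((integrable_fderiv_apply_smul him himc iv e).const_mul _),
    integral_add (integrable_smul_clm_apply hre.continuous hrec iV e)
      ((integrable_smul_clm_apply him.continuous himc iV e).const_mul _),
    integral_const_mul, integral_const_mul, hv _ hre hrec hreΩ e, hv _ him himc himΩ e]
  ring

lemma smooth_mul {v : E → ℂ} {V : E → E →L[ℝ] ℂ} (hv : HasWeakFDeriv Ω v V)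
    (iv : LocallyIntegrable v (volume.restrict Ω)) (iV : LocallyIntegrable V (volume.restrict Ω))
    {w : E → ℂ} (hw : ContDiff ℝ (⊤ : ℕ∞) w) :
    HasWeakFDeriv Ω (fun z => w z * v z) (fun z => w z • V z + v z • fderiv ℝ w z) := by
  intro φ hφ hφc hφΩ e
  have hψ : ContDiff ℝ (⊤ : ℕ∞) fun z => φ z • w z := hφ.smul hw
  have hψc : HasCompactSupport fun z => φ z • w z := hφc.smul_right
  have hleibniz : ∀ z, fderiv ℝ φ z e • (w z * v z) =
      fderiv ℝ (fun z => φ z • w z) z e • v z - (φ z • fderiv ℝ w z e) • v z := by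
    intro z
    rw [fderiv_fun_smul (hφ.differentiable (by simp) z) (hw.differentiable (by simp) z)]
    simp only [add_apply, smul_apply, ContinuousLinearMap.smulRight_apply, smul_eq_mul,
      Complex.real_smul]
    ring
  have idw : IntegrableOn (fun z => (φ z • fderiv ℝ w z e) • v z) Ω :=
    iv.integrable_smul_left_of_hasCompactSupport
      (hφ.continuous.smul ((hw.continuous_fderiv (by simp)).clm_apply continuous_const))
      hφc.smul_right
  have iψv : IntegrableOn (fun z => fderiv ℝ (fun z => φ z • w z) z e • v z) Ω :=
    iv.integrable_smul_left_of_hasCompactSupport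
      ((hψ.continuous_fderiv (by simp)).clm_apply continuous_const) (hψc.fderiv_apply ℝ e)
  have iψV : IntegrableOn (fun z => (φ z • w z) • V z e) Ω :=
    (iV.integrable_smul_left_of_hasCompactSupport hψ.continuous
      hψc).apply_continuousLinearMap e
  have hright : ∀ z, φ z • (w z • V z + v z • fderiv ℝ w z) e =
      (φ z • w z) • V z e + (φ z • fderiv ℝ w z e) • v z := by
    intro z
    simp only [add_apply, smul_apply, smul_eq_mul, Complex.real_smul]
    ring
  simp only [hleibniz, hright]
  rw [integral_sub iψv idw, integral_add iψV idw,
    hv.integral_fderiv_mul iv iV hψ hψc ((tsupport_smul_subset_left _ _).trans hφΩ) e]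
  abel

lemma of_tendsto {v : ℕ → E → F} {V : ℕ → E → E →L[ℝ] F} {v' : E → F} {V' : E → E →L[ℝ] F}
    {f g : E → ℝ} (h : ∀ n, HasWeakFDeriv Ω (v n) (V n))
    (mv : ∀ n, AEStronglyMeasurable (v n) (volume.restrict Ω))
    (mV : ∀ n, AEStronglyMeasurable (V n) (volume.restrict Ω))
    (hf : IntegrableOn f Ω) (hg : IntegrableOn g Ω)
    (bv : ∀ n, ∀ᵐ z ∂volume.restrict Ω, ‖v n z‖ ≤ f z)
    (bV : ∀ n, ∀ᵐ z ∂volume.restrict Ω, ‖V n z‖ ≤ g z)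
    (tv : ∀ᵐ z ∂volume.restrict Ω, Tendsto (fun n => v n z) atTop (𝓝 (v' z)))
    (tV : ∀ᵐ z ∂volume.restrict Ω, Tendsto (fun n => V n z) atTop (𝓝 (V' z))) :
    HasWeakFDeriv Ω v' V' := by
  intro φ hφ hφc hφΩ e
  have hdφ : Continuous fun z => fderiv ℝ φ z e :=
    (hφ.continuous_fderiv (by simp)).clm_apply continuous_const
  obtain ⟨C, hC⟩ := (hφc.fderiv_apply ℝ e).exists_bound_of_continuous hdφ
  obtain ⟨D, hD⟩ := hφc.exists_bound_of_continuous hφ.continuous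
  have hleft : Tendsto (fun n => ∫ z in Ω, fderiv ℝ φ z e • v n z) atTop
      (𝓝 (∫ z in Ω, fderiv ℝ φ z e • v' z)) := by
    refine tendsto_integral_of_dominated_convergence (fun z => C * f z)
      (fun n => hdφ.aestronglyMeasurable.smul (mv n)) (hf.const_mul C) (fun n => ?_)
      (tv.mono fun z hz => hz.const_smul _)
    filter_upwards [bv n] with z hz
    rw [norm_smul]
    exact mul_le_mul (hC z) hz (norm_nonneg _) ((norm_nonneg _).trans (hC z))
  have hright : Tendsto (fun n => ∫ z in Ω, φ z • V n z e) atTop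
      (𝓝 (∫ z in Ω, φ z • V' z e)) := by
    refine tendsto_integral_of_dominated_convergence (fun z => D * (g z * ‖e‖))
      (fun n => hφ.continuous.aestronglyMeasurable.smul ((mV n).apply_continuousLinearMap e))
      ((hg.mul_const _).const_mul D) (fun n => ?_)
      (tV.mono fun z hz => (((ContinuousLinearMap.apply ℝ F e).continuous.tendsto _).comp
        hz).const_smul _)
    filter_upwards [bV n] with z hz
    rw [norm_smul]
    exact mul_le_mul (hD z) ((V n z).le_of_opNorm_le hz e) (norm_nonneg _)
      ((norm_nonneg _).trans (hD z))
  refine tendsto_nhds_unique hleft (hright.neg.congr fun n => ?_)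
  rw [h n φ hφ hφc hφΩ e]

end HasWeakFDeriv

end WeakDerivative

/-! ### Multiplication by phases -/

lemma integrable_tsum_norm {α ι F : Type*} [MeasurableSpace α] {μ : Measure α} [Countable ι]
    [NormedAddCommGroup F] {f : ι → α → F} (hf : ∀ i, Integrable (f i) μ)
    (hs : Summable fun i => ∫ z, ‖f i z‖ ∂μ) : Integrable (fun z => ∑' i, ‖f i z‖) μ := by
  have hfin : ∫⁻ z, ∑' i, ‖f i z‖ₑ ∂μ ≠ ∞ := by
    rw [lintegral_tsum fun i => (hf i).aestronglyMeasurable.enorm]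
    simp_rw [← ofReal_integral_norm_eq_lintegral_enorm (hf _)]
    exact hs.tsum_ofReal_ne_top
  refine (integrable_toReal_of_lintegral_ne_top
    (AEMeasurable.tsum fun i => (hf i).aestronglyMeasurable.enorm) hfin).congr
    (ae_of_all _ fun z => ?_)
  simp only [ENNReal.tsum_toReal_eq fun _ => enorm_ne_top, toReal_enorm]

lemma ae_summable_norm {α ι F : Type*} [MeasurableSpace α] {μ : Measure α} [Countable ι]
    [NormedAddCommGroup F] {f : ι → α → F} (hf : ∀ i, Integrable (f i) μ)
    (hs : Summable fun i => ∫ z, ‖f i z‖ ∂μ) : ∀ᵐ z ∂μ, Summable fun i => ‖f i z‖ := by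
  refine summable_norm_of_tsum_eLpNorm_ne_top le_rfl (fun i => (hf i).aestronglyMeasurable) ?_
  simpa only [eLpNorm_one_eq_lintegral_enorm,
    ← ofReal_integral_norm_eq_lintegral_enorm (hf _)] using hs.tsum_ofReal_ne_top

lemma eventually_tprod_nat_add_eq_one {M : Type*} [CommMonoid M] [TopologicalSpace M]
    {f : ℕ → M} (hf : ∀ᶠ i in atTop, f i = 1) : ∀ᶠ N in atTop, ∏' i, f (i + N) = 1 := by
  obtain ⟨N₀, hN₀⟩ := eventually_atTop.1 hf
  filter_upwards [eventually_ge_atTop N₀] with N hN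
  simp [hN₀ _ (hN.trans (Nat.le_add_left N _))]

lemma norm_tsum_nat_add_le {F : Type*} [NormedAddCommGroup F] {f : ℕ → F}
    (hf : Summable fun i => ‖f i‖) (N : ℕ) : ‖∑' i, f (i + N)‖ ≤ ∑' i, ‖f i‖ :=
  (norm_tsum_le_tsum_norm ((summable_nat_add_iff (f := fun i => ‖f i‖) N).2 hf)).trans
    (tsum_comp_le_tsum_of_inj hf (fun _ => norm_nonneg _) (add_left_injective N))

section PhaseFactor

variable {E : Type*} [NormedAddCommGroup E] [NormedSpace ℝ E] {Ω : Set E}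
  {v w : E → ℂ} {V : E → E →L[ℝ] ℂ} {a : E → E →L[ℝ] ℝ}

/-- The derivative of `w v` given by the Leibniz rule when `V` is the derivative of `v` and
`w = exp (i θ)` has the possibly multivalued phase `θ` with current `a = dθ`. -/
def phaseDeriv (w : E → ℂ) (a : E → E →L[ℝ] ℝ) (v : E → ℂ) (V : E → E →L[ℝ] ℂ) (z : E) :
    E →L[ℝ] ℂ :=
  w z • (V z + (a z).smulRight (Complex.I * v z))

lemma norm_phaseDeriv_le {z : E} (hw : ‖w z‖ = 1) (hv : ‖v z‖ = 1) :
    ‖phaseDeriv w a v V z‖ ≤ ‖V z‖ + ‖a z‖ := by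
  rw [phaseDeriv, norm_smul, hw, one_mul]
  refine (norm_add_le _ _).trans_eq ?_
  rw [ContinuousLinearMap.norm_smulRight_apply, norm_mul, Complex.norm_I, one_mul, hv, mul_one]

/-- The equation `dw = i w α` at `z`, which says that `α` is the differential of the phase of a
unimodular map `w`. -/
def HasPhaseFDerivAt (w : E → ℂ) (α : E →L[ℝ] ℝ) (z : E) : Prop :=
  HasFDerivAt w (w z • α.smulRight Complex.I) z

namespace HasPhaseFDerivAt

variable {w' : E → ℂ} {α β : E →L[ℝ] ℝ} {z : E}

lemma mul (hw : HasPhaseFDerivAt w α z) (hw' : HasPhaseFDerivAt w' β z) :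
    HasPhaseFDerivAt (fun z => w z * w' z) (α + β) z := by
  refine (HasFDerivAt.mul hw hw').congr_fderiv ?_
  ext e
  simp
  ring

lemma conj (hw : HasPhaseFDerivAt w α z) : HasPhaseFDerivAt (fun z => star (w z)) (-α) z := by
  refine ((Complex.conjCLE : ℂ →L[ℝ] ℂ).hasFDerivAt.comp z hw).congr_fderiv ?_
  ext e
  simp

lemma exp {η : E → ℝ} (hη : HasFDerivAt η α z) :
    HasPhaseFDerivAt (fun z => Complex.exp (η z * Complex.I)) α z := by
  refine ((Complex.ofRealCLM.hasFDerivAt.comp z hη).mul_const Complex.I).cexp.congr_fderiv ?_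
  ext e
  simp [mul_comm]

lemma eq_zero_of_eventuallyEq_one (hw : HasPhaseFDerivAt w α z) (h : w =ᶠ[𝓝 z] 1) : α = 0 := by
  have heq := hw.unique ((hasFDerivAt_const (1 : ℂ) z).congr_of_eventuallyEq h)
  ext e
  simpa [h.eq_of_nhds] using congr($heq e)

end HasPhaseFDerivAt

lemma phaseDeriv_eq_of_hasPhaseFDerivAt {z : E} (hw : HasPhaseFDerivAt w (a z) z) :
    phaseDeriv w a v V z = w z • V z + v z • fderiv ℝ w z := by
  rw [HasFDerivAt.fderiv hw]
  ext e
  simp only [phaseDeriv, add_apply, smul_apply, ContinuousLinearMap.smulRight_apply, smul_eq_mul,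
    Complex.real_smul]
  ring

variable [MeasureSpace E]

/-- `v ∈ W^{1,1}(Ω;S¹)`, viewed as a complex-valued map, with weak derivative `V`. -/
structure IsUnimodularW11 (Ω : Set E) (v : E → ℂ) (V : E → E →L[ℝ] ℂ) : Prop where
  integrableOn : IntegrableOn v Ω
  norm_eq_one : ∀ᵐ z ∂volume.restrict Ω, ‖v z‖ = 1
  integrableOn_deriv : IntegrableOn V Ω
  hasWeakFDeriv : HasWeakFDeriv Ω v V

/-- Multiplication by `w` preserves `W^{1,1}(Ω;S¹)`, and acts on derivatives as multiplication
by a phase with current `a`. -/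
def IsPhaseFactor (Ω : Set E) (w : E → ℂ) (a : E → E →L[ℝ] ℝ) : Prop :=
  ∀ v V, IsUnimodularW11 Ω v V → IsUnimodularW11 Ω (fun z => w z * v z) (phaseDeriv w a v V)

namespace IsUnimodularW11

lemma integrableOn_one (h : IsUnimodularW11 Ω v V) : IntegrableOn (fun _ => (1 : ℝ)) Ω :=
  h.integrableOn.norm.congr h.norm_eq_one

lemma conj [BorelSpace E] (h : IsUnimodularW11 Ω v V) :
    IsUnimodularW11 Ω (fun z => star (v z))
      (fun z => (Complex.conjCLE : ℂ →L[ℝ] ℂ) ∘L V z) where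
  integrableOn := (Complex.conjCLE : ℂ →L[ℝ] ℂ).integrable_comp h.integrableOn
  norm_eq_one := h.norm_eq_one.mono fun z hz => by rw [norm_star, hz]
  integrableOn_deriv := (ContinuousLinearMap.compL ℝ E ℂ ℂ
    (Complex.conjCLE : ℂ →L[ℝ] ℂ)).integrable_comp h.integrableOn_deriv
  hasWeakFDeriv := h.hasWeakFDeriv.clm_comp h.integrableOn.locallyIntegrable
    h.integrableOn_deriv.locallyIntegrable (Complex.conjCLE : ℂ →L[ℝ] ℂ)

lemma of_tendsto [BorelSpace E] {v : ℕ → E → ℂ} {V : ℕ → E → E →L[ℝ] ℂ} {v' : E → ℂ}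
    {V' : E → E →L[ℝ] ℂ} {g : E → ℝ} (h : ∀ n, IsUnimodularW11 Ω (v n) (V n))
    (hg : IntegrableOn g Ω) (hVg : ∀ n, ∀ᵐ z ∂volume.restrict Ω, ‖V n z‖ ≤ g z)
    (tv : ∀ᵐ z ∂volume.restrict Ω, Tendsto (fun n => v n z) atTop (𝓝 (v' z)))
    (tV : ∀ᵐ z ∂volume.restrict Ω, Tendsto (fun n => V n z) atTop (𝓝 (V' z))) :
    IsUnimodularW11 Ω v' V' := by
  have mv := fun n => (h n).integrableOn.aestronglyMeasurable
  have mV := fun n => (h n).integrableOn_deriv.aestronglyMeasurable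
  have hnorm : ∀ᵐ z ∂volume.restrict Ω, ‖v' z‖ = 1 := by
    filter_upwards [tv, ae_all_iff.2 fun n => (h n).norm_eq_one] with z htv hv
    exact tendsto_nhds_unique htv.norm (by simp [hv])
  refine ⟨?_, hnorm, ?_, ?_⟩
  · exact (h 0).integrableOn_one.mono' (aestronglyMeasurable_of_tendsto_ae atTop mv tv)
      (hnorm.mono fun z hz => hz.le)
  · refine hg.mono' (aestronglyMeasurable_of_tendsto_ae atTop mV tV) ?_
    filter_upwards [tV, ae_all_iff.2 hVg] with z htV hV
    exact le_of_tendsto htV.norm (Eventually.of_forall hV)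
  · exact HasWeakFDeriv.of_tendsto (fun n => (h n).hasWeakFDeriv) mv mV
      (h 0).integrableOn_one hg (fun n => (h n).norm_eq_one.mono fun z hz => hz.le) hVg tv tV

end IsUnimodularW11

namespace IsPhaseFactor

lemma norm_eq_one (hw : IsPhaseFactor Ω w a) (hv : IsUnimodularW11 Ω v V) :
    ∀ᵐ z ∂volume.restrict Ω, ‖w z‖ = 1 := by
  filter_upwards [(hw v V hv).norm_eq_one, hv.norm_eq_one] with z hwv hv
  rwa [norm_mul, hv, mul_one] at hwv

lemma one : IsPhaseFactor Ω (fun _ : E => 1) (fun _ => 0) := by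
  intro v V h
  convert h using 1
  · simp only [one_mul]
  · ext z e
    simp [phaseDeriv]

lemma mul {w' : E → ℂ} {a' : E → E →L[ℝ] ℝ} (hw : IsPhaseFactor Ω w a)
    (hw' : IsPhaseFactor Ω w' a') :
    IsPhaseFactor Ω (fun z => w z * w' z) (fun z => a z + a' z) := by
  intro v V h
  convert hw _ _ (hw' v V h) using 1
  · simp only [mul_assoc]
  · ext z e
    simp only [phaseDeriv, add_apply, smul_apply, ContinuousLinearMap.smulRight_apply,
      smul_eq_mul, Complex.real_smul, Complex.ofReal_add]
    ring

lemma prod {ι : Type*} {w : ι → E → ℂ} {a : ι → E → E →L[ℝ] ℝ}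
    (h : ∀ i, IsPhaseFactor Ω (w i) (a i)) (s : Finset ι) :
    IsPhaseFactor Ω (fun z => ∏ i ∈ s, w i z) (fun z => ∑ i ∈ s, a i z) := by
  induction s using Finset.induction_on with
  | empty => simpa only [Finset.prod_empty, Finset.sum_empty] using one
  | insert i s hi ih =>
    simpa only [Finset.prod_insert hi, Finset.sum_insert hi] using (h i).mul ih

lemma conj [BorelSpace E] (hw : IsPhaseFactor Ω w a) :
    IsPhaseFactor Ω (fun z => star (w z)) (fun z => -a z) := by
  intro v V h
  convert (hw _ _ h.conj).conj using 1
  · simp only [star_mul', star_star]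
  · ext z e
    simp [phaseDeriv]

lemma of_tendsto [BorelSpace E] {w : ℕ → E → ℂ} {a : ℕ → E → E →L[ℝ] ℝ} {w' : E → ℂ}
    {a' : E → E →L[ℝ] ℝ} {g : E → ℝ} (h : ∀ n, IsPhaseFactor Ω (w n) (a n))
    (hg : IntegrableOn g Ω) (hag : ∀ n, ∀ᵐ z ∂volume.restrict Ω, ‖a n z‖ ≤ g z)
    (tw : ∀ᵐ z ∂volume.restrict Ω, Tendsto (fun n => w n z) atTop (𝓝 (w' z)))
    (ta : ∀ᵐ z ∂volume.restrict Ω, Tendsto (fun n => a n z) atTop (𝓝 (a' z))) :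
    IsPhaseFactor Ω w' a' := by
  intro v V hv
  refine .of_tendsto (fun n => h n v V hv) (hv.integrableOn_deriv.norm.add hg)
    (fun n => ?_) (tw.mono fun z hz => hz.mul_const _) ?_
  · filter_upwards [(h n).norm_eq_one hv, hv.norm_eq_one, hag n] with z hwz hvz haz
    exact (norm_phaseDeriv_le hwz hvz).trans (add_le_add_right haz _)
  · filter_upwards [tw, ta] with z hw ha
    exact hw.smul ((((ContinuousLinearMap.smulRightL ℝ E ℂ).flip _).continuous.tendsto _).comp
      ha |>.const_add _)

lemma of_hasWeakFDeriv (hwm : AEStronglyMeasurable w (volume.restrict Ω))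
    (hw1 : ∀ᵐ z ∂volume.restrict Ω, ‖w z‖ = 1) (ha : IntegrableOn a Ω)
    (hw : ∀ v V, IsUnimodularW11 Ω v V →
      HasWeakFDeriv Ω (fun z => w z * v z) (phaseDeriv w a v V)) :
    IsPhaseFactor Ω w a := by
  intro v V h
  have hsmulRight : AEStronglyMeasurable (fun z => (a z).smulRight (Complex.I * v z))
      (volume.restrict Ω) :=
    (ContinuousLinearMap.smulRightL ℝ E ℂ).aestronglyMeasurable_comp₂ ha.aestronglyMeasurable
      (h.integrableOn.aestronglyMeasurable.const_mul _)
  refine ⟨?_, ?_, ?_, hw v V h⟩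
  · exact h.integrableOn.bdd_mul hwm (hw1.mono fun z hz => hz.le)
  · filter_upwards [hw1, h.norm_eq_one] with z hwz hvz
    rw [norm_mul, hwz, hvz, one_mul]
  · refine (h.integrableOn_deriv.norm.add ha.norm).mono'
      (hwm.smul (h.integrableOn_deriv.aestronglyMeasurable.add hsmulRight)) ?_
    filter_upwards [hw1, h.norm_eq_one] with z hwz hvz
    exact norm_phaseDeriv_le hwz hvz

lemma of_contDiff [BorelSpace E] (hw : ContDiff ℝ (⊤ : ℕ∞) w) (hw1 : ∀ z, ‖w z‖ = 1)
    (hdw : ∀ z, HasPhaseFDerivAt w (a z) z) (ha : IntegrableOn a Ω) :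
    IsPhaseFactor Ω w a := by
  refine of_hasWeakFDeriv hw.continuous.aestronglyMeasurable (ae_of_all _ hw1) ha
    fun v V h => ?_
  convert h.hasWeakFDeriv.smooth_mul h.integrableOn.locallyIntegrable
    h.integrableOn_deriv.locallyIntegrable hw using 2 with z
  exact phaseDeriv_eq_of_hasPhaseFDerivAt (hdw z)

end IsPhaseFactor

omit [MeasureSpace E] in
lemma exists_norm_fderiv_le_mul_inv_norm {b : E → ℝ} (hb : ContDiff ℝ 1 b)
    (hbc : HasCompactSupport b) (hb0 : fderiv ℝ b 0 = 0) :
    ∃ K : ℝ, ∀ z, ‖fderiv ℝ b z‖ ≤ K * ‖z‖⁻¹ := by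
  obtain ⟨K, hK⟩ := (hbc.fderiv ℝ).norm.mul_left (f := fun z => ‖z‖)
    |>.exists_bound_of_continuous (continuous_norm.mul (hb.continuous_fderiv (by simp)).norm)
  refine ⟨K, fun z => ?_⟩
  rcases eq_or_ne z 0 with rfl | hz
  · simp [hb0]
  · rw [← div_eq_mul_inv, le_div_iff₀' (norm_pos_iff.2 hz)]
    exact (le_abs_self _).trans (hK z)

omit [MeasureSpace E] in
lemma contDiff_smul_of_eventuallyEq_zero {F : Type*} [NormedAddCommGroup F] [NormedSpace ℝ F]
    {n : WithTop ℕ∞} {p : E} {χ : E → ℝ} {f : E → F} (hχ : ContDiff ℝ n χ)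
    (hχp : χ =ᶠ[𝓝 p] 0) (hf : ContDiffOn ℝ n f {p}ᶜ) : ContDiff ℝ n fun z => χ z • f z := by
  refine contDiff_iff_contDiffAt.2 fun z => ?_
  rcases eq_or_ne z p with rfl | hz
  · refine (contDiffAt_const (c := (0 : F))).congr_of_eventuallyEq ?_
    filter_upwards [hχp] with z' hz'
    rw [hz', Pi.zero_apply, zero_smul]
  · exact hχ.contDiffAt.smul (hf.contDiffAt (isOpen_compl_singleton.mem_nhds hz))

omit [MeasureSpace E] in
lemma exists_cutoff_away_from_point [FiniteDimensional ℝ E] (p : E) :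
    ∃ (K : ℝ) (χ : ℕ → E → ℝ), (∀ n, ContDiff ℝ (⊤ : ℕ∞) (χ n)) ∧ (∀ n, χ n =ᶠ[𝓝 p] 0) ∧
      (∀ n z, χ n z ∈ Icc 0 1) ∧ (∀ n z, ‖fderiv ℝ (χ n) z‖ ≤ K * ‖z - p‖⁻¹) ∧
      ∀ z ≠ p, ∀ᶠ n in atTop, χ n =ᶠ[𝓝 z] 1 := by
  let b : ContDiffBump (0 : E) := ⟨1, 2, one_pos, one_lt_two⟩
  have hb : ContDiff ℝ (⊤ : ℕ∞) b := b.contDiff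
  obtain ⟨K, hK⟩ := exists_norm_fderiv_le_mul_inv_norm (hb.of_le (by simp))
    b.hasCompactSupport (b.eventuallyEq_one.fderiv_eq.trans (by simp))
  have hscale : ∀ (n : ℕ) (z : E), HasFDerivAt (fun z => ((n : ℝ) + 1) • (z - p))
      (((n : ℝ) + 1) • ContinuousLinearMap.id ℝ E) z := fun n z =>
    ((hasFDerivAt_id z).sub_const p).const_smul _
  refine ⟨K, fun n z => 1 - b (((n : ℝ) + 1) • (z - p)), fun n => ?_, fun n => ?_,
    fun n z => ⟨sub_nonneg.2 b.le_one, sub_le_self _ b.nonneg⟩, fun n z => ?_, fun z hz => ?_⟩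
  · exact contDiff_const.sub (hb.comp (contDiff_const.smul (contDiff_id.sub contDiff_const)))
  · have : Tendsto (fun z => ((n : ℝ) + 1) • (z - p)) (𝓝 p) (𝓝 0) := by
      simpa using (hscale n p).continuousAt.tendsto
    filter_upwards [this.eventually b.eventuallyEq_one] with z hz
    simpa [sub_eq_zero] using hz.symm
  · have hn : (0 : ℝ) < n + 1 := n.cast_add_one_pos
    have hderiv : HasFDerivAt (fun z => 1 - b (((n : ℝ) + 1) • (z - p))) _ z :=
      ((hb.differentiable (by simp) _).hasFDerivAt.comp z (hscale n z)).const_sub 1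
    beta_reduce
    rw [hderiv.fderiv, ContinuousLinearMap.comp_smul, ContinuousLinearMap.comp_id, norm_neg,
      norm_smul, Real.norm_of_nonneg hn.le]
    calc ((n : ℝ) + 1) * ‖fderiv ℝ b (((n : ℝ) + 1) • (z - p))‖
        ≤ ((n : ℝ) + 1) * (K * ‖((n : ℝ) + 1) • (z - p)‖⁻¹) := by gcongr; exact hK _
      _ = K * ‖z - p‖⁻¹ := by
        rw [norm_smul, Real.norm_of_nonneg hn.le]
        field_simp
  · obtain ⟨N, hN⟩ := exists_nat_gt (2 / ‖z - p‖)
    filter_upwards [eventually_ge_atTop N] with n hn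
    have hfar : 2 < ‖((n : ℝ) + 1) • (z - p)‖ := by
      rw [norm_smul, Real.norm_of_nonneg n.cast_add_one_pos.le,
        ← div_lt_iff₀ (norm_pos_iff.2 (sub_ne_zero.2 hz))]
      exact hN.trans (by exact_mod_cast Nat.lt_succ_of_le hn)
    filter_upwards [(hscale n z).continuousAt.norm.eventually_const_lt hfar] with z' hz'
    simp [b.zero_of_le_dist (x := ((n : ℝ) + 1) • (z' - p)) (by simpa using hz'.le)]

omit [MeasureSpace E] in
lemma norm_fderiv_smul_le {χ : E → ℝ} {z : E} (hχ : DifferentiableAt ℝ χ z) (hχ1 : |χ z| ≤ 1)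
    (hw1 : ‖w z‖ = 1) (hdw : HasPhaseFDerivAt w (a z) z) :
    ‖fderiv ℝ (fun z => χ z • w z) z‖ ≤ ‖a z‖ + ‖fderiv ℝ χ z‖ := by
  rw [(hχ.hasFDerivAt.fun_smul hdw).fderiv]
  refine (norm_add_le _ _).trans (add_le_add ?_ ?_)
  · rw [norm_smul, norm_smul, ContinuousLinearMap.norm_smulRight_apply, hw1, Complex.norm_I,
      one_mul, mul_one]
    exact mul_le_of_le_one_left (norm_nonneg _) hχ1
  · rw [ContinuousLinearMap.norm_smulRight_apply, hw1, mul_one]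

lemma IsPhaseFactor.of_contDiffOn_compl_singleton [BorelSpace E] [FiniteDimensional ℝ E]
    [NullSingletonClass (volume : Measure E)] {p : E}
    (hw : ContDiffOn ℝ (⊤ : ℕ∞) w {p}ᶜ) (hw1 : ∀ z ≠ p, ‖w z‖ = 1)
    (hdw : ∀ z ≠ p, HasPhaseFDerivAt w (a z) z) (ha : IntegrableOn a Ω)
    (hp : IntegrableOn (fun z => ‖z - p‖⁻¹) Ω) : IsPhaseFactor Ω w a := by
  obtain ⟨K, χ, hχ, hχp, hχ01, hχK, hχ1⟩ := exists_cutoff_away_from_point p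
  have hne : ∀ᵐ z ∂volume.restrict Ω, z ≠ p := ae_restrict_of_ae (Measure.ae_ne volume p)
  have hχw : ∀ n, ContDiff ℝ (⊤ : ℕ∞) fun z => χ n z • w z := fun n =>
    contDiff_smul_of_eventuallyEq_zero (hχ n) (hχp n) hw
  have hχ_le : ∀ n z, |χ n z| ≤ 1 := fun n z =>
    abs_le.2 ⟨by linarith [(hχ01 n z).1], (hχ01 n z).2⟩
  have hdχw : ∀ n, ∀ z ≠ p, ‖fderiv ℝ (fun z => χ n z • w z) z‖ ≤ ‖a z‖ + K * ‖z - p‖⁻¹ :=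
    fun n z hz => (norm_fderiv_smul_le ((hχ n).differentiable (by simp) z) (hχ_le n z) (hw1 z hz)
      (hdw z hz)).trans (add_le_add_right (hχK n z) _)
  have hlim : ∀ z ≠ p, ∀ᶠ n in atTop, (fun z => χ n z • w z) =ᶠ[𝓝 z] w := fun z hz =>
    (hχ1 z hz).mono fun n hn => hn.mono fun z' hz' => by simp [hz']
  refine of_hasWeakFDeriv ?_ (hne.mono hw1) ha fun v V h => ?_
  · exact aestronglyMeasurable_of_tendsto_ae atTop
      (fun n => (hχw n).continuous.aestronglyMeasurable) (hne.mono fun z hz =>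
        tendsto_const_nhds.congr' ((hlim z hz).mono fun n hn => hn.eq_of_nhds.symm))
  have mv := h.integrableOn.aestronglyMeasurable
  have mV := h.integrableOn_deriv.aestronglyMeasurable
  refine .of_tendsto (f := fun _ => 1) (g := fun z => ‖V z‖ + (‖a z‖ + K * ‖z - p‖⁻¹))
    (fun n => h.hasWeakFDeriv.smooth_mul h.integrableOn.locallyIntegrable
      h.integrableOn_deriv.locallyIntegrable (hχw n))
    (fun n => (hχw n).continuous.aestronglyMeasurable.mul mv)
    (fun n => ((hχw n).continuous.aestronglyMeasurable.smul mV).add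
      (mv.smul ((hχw n).continuous_fderiv (by simp)).aestronglyMeasurable))
    h.integrableOn_one (h.integrableOn_deriv.norm.add (ha.norm.add (hp.const_mul K)))
    (fun n => ?_) (fun n => ?_) ?_ ?_
  · filter_upwards [hne, h.norm_eq_one] with z hz hv
    simpa [hv, hw1 z hz] using hχ_le n z
  · filter_upwards [hne, h.norm_eq_one] with z hz hv
    refine (norm_add_le _ _).trans (add_le_add ?_ ?_)
    · simpa [norm_smul, hw1 z hz] using mul_le_of_le_one_left (norm_nonneg _) (hχ_le n z)
    · simpa [norm_smul, hv] using hdχw n z hz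
  · filter_upwards [hne] with z hz
    exact tendsto_const_nhds.congr' ((hlim z hz).mono fun n hn =>
      congrArg (· * v z) hn.eq_of_nhds.symm)
  · filter_upwards [hne] with z hz
    rw [phaseDeriv_eq_of_hasPhaseFDerivAt (hdw z hz)]
    exact tendsto_const_nhds.congr' ((hlim z hz).mono fun n hn => by
      beta_reduce
      rw [hn.fderiv_eq, show χ n z • w z = w z from hn.eq_of_nhds])

section Series

variable {w : ℕ → E → ℂ} {a : ℕ → E → E →L[ℝ] ℝ}

lemma IsPhaseFactor.tprod [BorelSpace E] (h : ∀ i, IsPhaseFactor Ω (w i) (a i))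
    (ha : ∀ i, IntegrableOn (a i) Ω) (hs : Summable fun i => ∫ z in Ω, ‖a i z‖)
    (hw : ∀ᵐ z ∂volume.restrict Ω, ∀ᶠ i in atTop, w i z = 1) :
    IsPhaseFactor Ω (fun z => ∏' i, w i z) (fun z => ∑' i, a i z) := by
  refine .of_tendsto (fun n => prod h (Finset.range n)) (integrable_tsum_norm ha hs)
    (fun n => ?_) ?_ ?_
  · filter_upwards [ae_summable_norm ha hs] with z hz
    exact (norm_sum_le _ _).trans (hz.sum_le_tsum _ fun i _ => norm_nonneg _)
  · filter_upwards [hw] with z hz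
    rw [← Nat.cofinite_eq_atTop] at hz
    exact (multipliable_of_hasFiniteMulSupport hz).hasProd.tendsto_prod_nat
  · filter_upwards [ae_summable_norm ha hs] with z hz using hz.of_norm.hasSum.tendsto_sum_nat

lemma IsUnimodularW11.tendsto_integral_sub_phaseDeriv_tail [BorelSpace E]
    (hv : IsUnimodularW11 Ω v V) (h : ∀ i, IsPhaseFactor Ω (w i) (a i))
    (ha : ∀ i, IntegrableOn (a i) Ω) (hs : Summable fun i => ∫ z in Ω, ‖a i z‖)
    (hw : ∀ᵐ z ∂volume.restrict Ω, ∀ᶠ i in atTop, w i z = 1) :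
    Tendsto (fun N => ∫ z in Ω, (‖v z - (∏' i, w (i + N) z) * v z‖ +
      ‖V z - phaseDeriv (fun z => ∏' i, w (i + N) z) (fun z => ∑' i, a (i + N) z) v V z‖))
      atTop (𝓝 0) := by
  have htail : ∀ N, IsPhaseFactor Ω (fun z => ∏' i, w (i + N) z) (fun z => ∑' i, a (i + N) z) :=
    fun N => .tprod (fun i => h _) (fun i => ha _) ((summable_nat_add_iff N).2 hs)
      (hw.mono fun z hz => (tendsto_add_atTop_nat N).eventually hz)
  suffices h0 : Tendsto _ atTop (𝓝 (∫ _ in Ω, (0 : ℝ))) by simpa only [integral_zero] using h0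
  refine tendsto_integral_of_dominated_convergence
    (fun z => 2 * 1 + (2 * ‖V z‖ + ∑' i, ‖a i z‖)) (fun N => ?_)
    ((hv.integrableOn_one.const_mul 2).add
      ((hv.integrableOn_deriv.norm.const_mul 2).add (integrable_tsum_norm ha hs)))
    (fun N => ?_) ?_
  · have hNv := htail N v V hv
    exact (hv.integrableOn.sub hNv.integrableOn).norm.aestronglyMeasurable.add
      (hv.integrableOn_deriv.sub hNv.integrableOn_deriv).norm.aestronglyMeasurable
  · filter_upwards [hv.norm_eq_one, (htail N).norm_eq_one hv, ae_summable_norm ha hs]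
      with z hv1 hw1 hsum
    rw [Real.norm_of_nonneg (by positivity)]
    refine add_le_add ((norm_sub_le _ _).trans_eq ?_) ((norm_sub_le _ _).trans ?_)
    · rw [norm_mul, hv1, hw1]
      norm_num
    · linarith [norm_tsum_nat_add_le hsum N, norm_phaseDeriv_le (w := fun z => ∏' i, w (i + N) z)
        (a := fun z => ∑' i, a (i + N) z) (V := V) hw1 hv1]
  · filter_upwards [hw] with z hwz
    have hlim : Tendsto (fun N => ‖∑' i, a (i + N) z‖ * ‖Complex.I * v z‖) atTop (𝓝 0) := by
      simpa using (tendsto_sum_nat_add fun i => a i z).norm.mul_const ‖Complex.I * v z‖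
    refine hlim.congr' ?_
    filter_upwards [eventually_tprod_nat_add_eq_one hwz] with N hN
    rw [phaseDeriv, hN, one_mul, one_smul, sub_self, norm_zero, zero_add, sub_add_cancel_left,
      norm_neg, ContinuousLinearMap.norm_smulRight_apply]

end Series

end PhaseFactor

/-! ### Lipschitz functions -/

lemma inter_frontier_nonempty_of_isPreconnected {X : Type*} [TopologicalSpace X] {t s : Set X}
    (ht : IsPreconnected t) {p q : X} (hpt : p ∈ t) (hqt : q ∈ t) (hp : p ∈ s) (hq : q ∉ s) :
    (t ∩ frontier s).Nonempty := by
  by_contra hempty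
  have hnot : ∀ r ∈ t, r ∉ frontier s := fun r hr hrf => hempty ⟨r, hr, hrf⟩
  have hpint : p ∈ interior s := by_contra fun h => hnot p hpt ⟨subset_closure hp, h⟩
  have hqext : q ∉ closure s := fun h => hnot q hqt ⟨h, fun h' => hq (interior_subset h')⟩
  obtain ⟨r, -, hrint, hrext⟩ := ht (interior s) (closure s)ᶜ isOpen_interior
    isClosed_closure.isOpen_compl (fun r hr => or_iff_not_imp_right.2 fun h =>
      by_contra fun h' => hnot r hr ⟨not_not.1 h, h'⟩) ⟨p, hpt, hpint⟩ ⟨q, hqt, hqext⟩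
  exact hrext (interior_subset_closure hrint)

lemma lipschitzWith_indicator {E F : Type*} [NormedAddCommGroup E] [NormedSpace ℝ E]
    [NormedAddCommGroup F] {Ω : Set E} {φ : E → F} {L : ℝ≥0} (hφ : LipschitzOnWith L φ (closure Ω))
    (h0 : ∀ p ∈ frontier Ω, φ p = 0) : LipschitzWith L (Ω.indicator φ) := by
  have hcross : ∀ p ∈ Ω, ∀ q ∉ Ω, dist (Ω.indicator φ p) (Ω.indicator φ q) ≤ L * dist p q := by
    intro p hp q hq
    obtain ⟨r, hr, hrf⟩ := inter_frontier_nonempty_of_isPreconnected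
      (convex_segment p q).isPreconnected (left_mem_segment ℝ p q) (right_mem_segment ℝ p q) hp hq
    calc dist (Ω.indicator φ p) (Ω.indicator φ q)
        = dist (φ p) (φ r) := by rw [indicator_of_mem hp, indicator_of_notMem hq, h0 r hrf]
      _ ≤ L * dist p r := hφ.dist_le_mul p (subset_closure hp) r hrf.1
      _ ≤ L * dist p q := by
        gcongr
        linarith [dist_add_dist_of_mem_segment hr, dist_nonneg (x := r) (y := q)]
  refine LipschitzWith.of_dist_le_mul fun p q => ?_
  by_cases hp : p ∈ Ω <;> by_cases hq : q ∈ Ω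
  · rw [indicator_of_mem hp, indicator_of_mem hq]
    exact hφ.dist_le_mul p (subset_closure hp) q (subset_closure hq)
  · exact hcross p hp q hq
  · rw [dist_comm, dist_comm p q]
    exact hcross q hq p hp
  · rw [indicator_of_notMem hp, indicator_of_notMem hq, dist_self]
    positivity

lemma indicator_eq_self_of_mem_closure {E F : Type*} [TopologicalSpace E] [Zero F] {Ω : Set E}
    {φ : E → F} (h0 : ∀ p ∈ frontier Ω, φ p = 0) {p : E} (hp : p ∈ closure Ω) :
    Ω.indicator φ p = φ p :=
  indicator_apply_eq_self.2 fun h => h0 p ⟨hp, fun h' => h (interior_subset h')⟩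

section Lipschitz

variable {E : Type*} [NormedAddCommGroup E] [NormedSpace ℝ E] [FiniteDimensional ℝ E]
  [MeasurableSpace E] [BorelSpace E] {μ : Measure E} [μ.IsAddHaarMeasure] {g : E → ℝ} {L : ℝ≥0}

lemma ae_fderiv_eq_zero_of_eqOn_zero (hg : LipschitzWith L g) {s : Set E} (hs : MeasurableSet s)
    (h0 : EqOn g 0 s) : ∀ᵐ z ∂μ, z ∈ s → fderiv ℝ g z = 0 := by
  rcases subsingleton_or_nontrivial E with hE | hE
  · exact ae_of_all _ fun z _ => Subsingleton.elim _ _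
  obtain ⟨e, he⟩ := exists_ne (0 : E)
  let t : Set E := s ∩ {z | DifferentiableAt ℝ g z}
  have ht : MeasurableSet t := hs.inter (measurableSet_of_differentiableAt ℝ g)
  have happrox : ApproximatesLinearOn (fun z => g z • e) (0 : E →L[ℝ] E) t 0 := by
    intro x hx y hy
    simp [h0 hx.1, h0 hy.1]
  have hzero := happrox.norm_fderiv_sub_le μ ht _
    fun z hz => (hz.2.hasFDerivAt.smul_const e).hasFDerivWithinAt
  rw [ae_restrict_iff' ht] at hzero
  filter_upwards [hzero, hg.ae_differentiableAt (μ := μ)] with z hz hdiff hzs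
  simpa [he] using hz ⟨hzs, hdiff⟩

lemma integral_fderiv_mul_eq_neg_of_lipschitzWith {f : E → ℝ} (hf : ContDiff ℝ 1 f)
    (hg : LipschitzWith L g) (hgc : HasCompactSupport g) (e : E) :
    ∫ z, fderiv ℝ f z e * g z ∂μ = -∫ z, f z * fderiv ℝ g z e ∂μ := by
  obtain ⟨R, hR, hsub⟩ := hgc.isCompact.isBounded.subset_ball_lt 0 (0 : E)
  let χ : ContDiffBump (0 : E) := ⟨R, R + 1, hR, by linarith⟩
  have hχ_one : ∀ z ∈ tsupport g, χ =ᶠ[𝓝 z] 1 := fun z hz => by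
    filter_upwards [isOpen_ball.mem_nhds (hsub hz)] with y hy
    exact χ.one_of_mem_closedBall (ball_subset_closedBall hy)
  have hχf : ContDiff ℝ 1 (fun z => χ z * f z) := χ.contDiff.mul hf
  obtain ⟨C, hC⟩ :=
    ContDiff.lipschitzWith_of_hasCompactSupport χ.hasCompactSupport.mul_right hχf one_ne_zero
  have hleft : ∀ z, lineDeriv ℝ (fun z => χ z * f z) z e * g z = fderiv ℝ f z e * g z := by
    intro z
    by_cases hz : z ∈ tsupport g
    · have hnear : (fun z => χ z * f z) =ᶠ[𝓝 z] f := by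
        filter_upwards [hχ_one z hz] with y hy
        rw [hy, Pi.one_apply, one_mul]
      rw [(hχf.differentiable one_ne_zero z).lineDeriv_eq_fderiv, hnear.fderiv_eq]
    · simp [image_eq_zero_of_notMem_tsupport hz]
  have hright : ∀ᵐ z ∂μ, lineDeriv ℝ g z (-e) * (χ z * f z) = -(f z * fderiv ℝ g z e) := by
    filter_upwards [hg.ae_differentiableAt (μ := μ)] with z hz
    rw [hz.lineDeriv_eq_fderiv, map_neg]
    by_cases hz' : z ∈ tsupport g
    · rw [(hχ_one z hz').eq_of_nhds, Pi.one_apply]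
      ring
    · simp [fderiv_of_notMem_tsupport ℝ hz']
  rw [← integral_neg, ← integral_congr_ae hright, ← integral_congr_ae (ae_of_all _ hleft)]
  exact hC.integral_lineDeriv_mul_eq hg hgc e

lemma integral_fderiv_mul_fderiv_comm {η : E → ℝ} (hη : ContDiff ℝ 2 η) (hg : LipschitzWith L g)
    (hgc : HasCompactSupport g) (e f : E) :
    ∫ z, fderiv ℝ η z e * fderiv ℝ g z f ∂μ = ∫ z, fderiv ℝ η z f * fderiv ℝ g z e ∂μ := by
  have hdη : ContDiff ℝ 1 (fderiv ℝ η) := hη.fderiv_right le_rfl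
  have hd : ∀ e z, HasFDerivAt (fun z => fderiv ℝ η z e) _ z := fun e z =>
    (hdη.differentiable one_ne_zero z).hasFDerivAt.clm_apply (hasFDerivAt_const e z)
  have hsymm : ∀ z, fderiv ℝ (fun z => fderiv ℝ η z e) z f =
      fderiv ℝ (fun z => fderiv ℝ η z f) z e := fun z => by
    rw [(hd e z).fderiv, (hd f z).fderiv]
    simpa using (hη.contDiffAt (x := z)).isSymmSndFDerivAt (by simp) f e
  rw [← neg_inj,
    ← integral_fderiv_mul_eq_neg_of_lipschitzWith (hdη.clm_apply contDiff_const) hg hgc,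
    ← integral_fderiv_mul_eq_neg_of_lipschitzWith (hdη.clm_apply contDiff_const) hg hgc]
  simp_rw [hsymm]

end Lipschitz

/-! ### Radial integrals -/

lemma deriv_smul_eq_inv_mul_lineDeriv {E : Type*} [NormedAddCommGroup E] [NormedSpace ℝ E]
    (g : E → ℝ) (ω : E) {r : ℝ} (hr : r ≠ 0) :
    deriv (fun s : ℝ => g (s • ω)) r = r⁻¹ * lineDeriv ℝ g (r • ω) (r • ω) := by
  have hshift : (fun t : ℝ => g (r • ω + t • ω)) = fun t => g ((r + t) • ω) := by
    simp only [add_smul]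
  rw [lineDeriv_smul, smul_eq_mul, inv_mul_cancel_left₀ hr, lineDeriv, hshift,
    deriv_comp_const_add (f := fun s : ℝ => g (s • ω)), add_zero]

lemma integral_Ioi_deriv_of_lipschitzWith {f : ℝ → ℝ} {L : ℝ≥0} (hf : LipschitzWith L f)
    (hfc : HasCompactSupport f) : ∫ r in Ioi (0 : ℝ), deriv f r = -f 0 := by
  obtain ⟨R, hR, hsub⟩ := hfc.isCompact.isBounded.subset_ball_lt 0 (0 : ℝ)
  have hoff : ∀ r, R ≤ r → r ∉ tsupport f := fun r hr h => by
    have := abs_lt.1 (mem_ball_zero_iff.1 (hsub h))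
    linarith [this.2]
  have hderiv : ∀ r ∈ Ioi (0 : ℝ) \ Ioc 0 R, deriv f r = 0 := fun r hr =>
    by_contra fun h =>
      hoff r (not_lt.1 fun h' => hr.2 ⟨hr.1, h'.le⟩) (support_deriv_subset h)
  rw [setIntegral_eq_of_subset_of_forall_sdiff_eq_zero measurableSet_Ioi Ioc_subset_Ioi_self
    hderiv, ← intervalIntegral.integral_of_le hR.le,
    (hf.lipschitzOnWith.absolutelyContinuousOnInterval).integral_deriv_eq_sub,
    image_eq_zero_of_notMem_tsupport (hoff R le_rfl), zero_sub]

section Radial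

open Module (finrank)

variable {E : Type*} [NormedAddCommGroup E] [NormedSpace ℝ E] [FiniteDimensional ℝ E]
  [Nontrivial E] [MeasurableSpace E] [BorelSpace E] {μ : Measure E} [μ.IsAddHaarMeasure]

lemma integral_volumeIoiPow {F : Type*} [NormedAddCommGroup F] [NormedSpace ℝ F] (n : ℕ)
    (f : ℝ → F) :
    ∫ r, f r ∂Measure.volumeIoiPow n = ∫ r in Ioi (0 : ℝ), r ^ n • f r := by
  simp only [Measure.volumeIoiPow, ENNReal.ofReal]
  rw [integral_withDensity_eq_integral_smul (measurable_subtype_coe.pow_const _).real_toNNReal,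
    integral_subtype_comap measurableSet_Ioi fun r => Real.toNNReal (r ^ n) • f r]
  refine setIntegral_congr_fun measurableSet_Ioi fun r hr => ?_
  rw [NNReal.smul_def, Real.coe_toNNReal _ (pow_nonneg (mem_Ioi.1 hr).le _)]

lemma integral_eq_integral_toSphere {F : Type*} [NormedAddCommGroup F] [NormedSpace ℝ F]
    {f : E → F} (hf : Integrable f μ) :
    ∫ z, f z ∂μ =
      ∫ ω, (∫ r in Ioi (0 : ℝ), r ^ (finrank ℝ E - 1) • f (r • (ω : E))) ∂μ.toSphere := by
  have hpolar := μ.measurePreserving_homeomorphUnitSphereProd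
  have hemb : MeasurableEmbedding (homeomorphUnitSphereProd E) :=
    Homeomorph.measurableEmbedding _
  let F' : sphere (0 : E) 1 × Ioi (0 : ℝ) → F := fun q => f (q.2.1 • (q.1 : E))
  have hF' : ∀ z : ({0}ᶜ : Set E), F' (homeomorphUnitSphereProd E z) = f z := fun z => by
    have hz : ‖(z : E)‖ ≠ 0 := norm_ne_zero_iff.2 z.2
    simp [F', smul_smul, hz]
  have hint : Integrable F' (μ.toSphere.prod (.volumeIoiPow (finrank ℝ E - 1))) := by
    rw [← hpolar.integrable_comp_emb hemb]
    simp only [Function.comp_def, hF']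
    exact (integrableOn_iff_comap_subtypeVal (measurableSet_singleton _).compl).1 hf.integrableOn
  calc ∫ z, f z ∂μ
      = ∫ z : ({0}ᶜ : Set E), f z ∂(μ.comap (↑)) := by
        rw [integral_subtype_comap (measurableSet_singleton _).compl f, restrict_compl_singleton]
    _ = ∫ q, F' q ∂μ.toSphere.prod (.volumeIoiPow (finrank ℝ E - 1)) := by
        simpa only [hF'] using hpolar.integral_comp hemb F'
    _ = _ := by
        rw [integral_prod _ hint]
        exact integral_congr_ae (ae_of_all _ fun ω =>
          integral_volumeIoiPow _ fun r => f (r • (ω : E)))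

lemma integrableOn_ball_inv_norm_pow (p : E) (R : ℝ) :
    IntegrableOn (fun z => (‖z - p‖ ^ (finrank ℝ E - 1))⁻¹) (ball p R) μ := by
  have hzero : IntegrableOn (fun z => (‖z‖ ^ (finrank ℝ E - 1))⁻¹) (ball (0 : E) R) μ := by
    rw [integrableOn_fun_norm_addHaar μ (f := fun r => (r ^ (finrank ℝ E - 1))⁻¹)]
    refine (integrableOn_const (C := (1 : ℝ)) (by simp)).congr_fun (fun r hr => ?_)
      measurableSet_Ioo
    rw [smul_eq_mul, mul_inv_cancel₀ (pow_pos hr.1 _).ne']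
  have hpre : (fun z => z - p) ⁻¹' ball 0 R = ball p R := by
    ext z
    simp [dist_eq_norm]
  rw [← hpre]
  exact ((measurePreserving_sub_right μ p).integrableOn_comp_preimage
    (Homeomorph.subRight p).measurableEmbedding).2 hzero

lemma integral_ball_inv_norm_pow (p : E) {R : ℝ} (hR : 0 ≤ R) :
    ∫ z in ball p R, (‖z - p‖ ^ (finrank ℝ E - 1))⁻¹ ∂μ = finrank ℝ E * μ.real (ball 0 1) * R := by
  let k : ℝ → ℝ := (Iio R).indicator fun r => (r ^ (finrank ℝ E - 1))⁻¹
  have hk : ∀ z, (ball p R).indicator (fun z => (‖z - p‖ ^ (finrank ℝ E - 1))⁻¹) z =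
      k ‖z - p‖ := fun z => by
    simp [k, indicator_apply, dist_eq_norm]
  have hradial : ∀ r ∈ Ioi (0 : ℝ), r ^ (finrank ℝ E - 1) • k r = (Iio R).indicator 1 r := by
    intro r hr
    simp only [k, indicator_apply, smul_eq_mul, mul_ite, mul_zero, Pi.one_apply,
      mul_inv_cancel₀ (pow_pos (mem_Ioi.1 hr) _).ne']
  rw [← integral_indicator measurableSet_ball, integral_congr_ae (ae_of_all _ hk),
    integral_sub_right_eq_self (fun z => k ‖z‖) p, integral_fun_norm_addHaar,
    setIntegral_congr_fun measurableSet_Ioi hradial, setIntegral_indicator measurableSet_Iio,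
    Ioi_inter_Iio]
  simp [hR, mul_assoc]

lemma integrable_inv_norm_pow_mul_fderiv_self {g : E → ℝ} {L : ℝ≥0} (hg : LipschitzWith L g)
    (hgc : HasCompactSupport g) :
    Integrable (fun z => (‖z‖ ^ finrank ℝ E)⁻¹ * fderiv ℝ g z z) μ := by
  obtain ⟨R, -, hsub⟩ := hgc.isCompact.isBounded.subset_ball_lt 0 (0 : E)
  have hmeas : Measurable fun z => fderiv ℝ g z z :=
    ContinuousLinearMap.measurable_apply₂.comp ((measurable_fderiv ℝ g).prodMk measurable_id)
  have hzero : ∀ z ∉ ball (0 : E) R, (‖z‖ ^ finrank ℝ E)⁻¹ * fderiv ℝ g z z = 0 := fun z hz => by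
    rw [fderiv_of_notMem_tsupport ℝ fun h => hz (hsub h), zero_apply, mul_zero]
  have hdom := (integrableOn_ball_inv_norm_pow (μ := μ) (0 : E) R).const_mul (L : ℝ)
  simp only [sub_zero] at hdom
  refine (integrableOn_iff_integrable_of_support_subset (s := ball 0 R)
    fun z hz => not_not.1 (mt (hzero z) hz)).1 (hdom.mono'
      (((measurable_norm.pow_const _).inv.mul hmeas).aestronglyMeasurable) ?_)
  refine ae_of_all _ fun z => ?_
  rcases eq_or_ne z 0 with rfl | hz
  · simp only [map_zero, mul_zero, norm_zero]
    positivity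
  have := norm_pos_iff.2 hz
  calc ‖(‖z‖ ^ finrank ℝ E)⁻¹ * fderiv ℝ g z z‖
      ≤ (‖z‖ ^ finrank ℝ E)⁻¹ * (L * ‖z‖) := by
        rw [norm_mul, norm_inv, norm_pow, norm_norm]
        gcongr
        exact (fderiv ℝ g z).le_of_opNorm_le (norm_fderiv_le_of_lipschitz ℝ hg) z
    _ = L * (‖z‖ ^ (finrank ℝ E - 1))⁻¹ := by
        rw [← pow_sub_one_mul Module.finrank_pos.ne' ‖z‖]
        field_simp

lemma integral_inv_norm_pow_mul_fderiv_self {g : E → ℝ} {L : ℝ≥0} (hg : LipschitzWith L g)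
    (hgc : HasCompactSupport g) :
    ∫ z, (‖z‖ ^ finrank ℝ E)⁻¹ * fderiv ℝ g z z ∂μ = -(finrank ℝ E * μ.real (ball 0 1) * g 0) := by
  have hline : ∀ᵐ z ∂μ, (‖z‖ ^ finrank ℝ E)⁻¹ * fderiv ℝ g z z =
      (‖z‖ ^ finrank ℝ E)⁻¹ * lineDeriv ℝ g z z := by
    filter_upwards [hg.ae_differentiableAt (μ := μ)] with z hz
    rw [hz.lineDeriv_eq_fderiv]
  have hray : ∀ ω : sphere (0 : E) 1, ∫ r in Ioi (0 : ℝ), r ^ (finrank ℝ E - 1) •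
      ((‖r • (ω : E)‖ ^ finrank ℝ E)⁻¹ * lineDeriv ℝ g (r • (ω : E)) (r • (ω : E))) = -g 0 := by
    intro ω
    have hω : ‖(ω : E)‖ = 1 := mem_sphere_zero_iff_norm.1 ω.2
    have hclosed : Topology.IsClosedEmbedding fun r : ℝ => r • (ω : E) :=
      LinearMap.isClosedEmbedding_of_injective (f := LinearMap.toSpanSingleton ℝ E ω)
        (LinearMap.ker_toSpanSingleton ℝ (norm_ne_zero_iff.1 (hω.trans_ne one_ne_zero)))
    have hlip : LipschitzWith 1 fun r : ℝ => r • (ω : E) :=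
      LipschitzWith.of_dist_le_mul fun r s => by
        rw [dist_eq_norm, ← sub_smul, norm_smul, hω, mul_one, NNReal.coe_one, one_mul]
        exact (Real.dist_eq r s).ge
    have hftc := integral_Ioi_deriv_of_lipschitzWith (hg.comp hlip)
      (hgc.comp_isClosedEmbedding hclosed)
    rw [Function.comp_apply, zero_smul] at hftc
    rw [← hftc]
    refine setIntegral_congr_fun measurableSet_Ioi fun r hr => ?_
    have hr0 : (0 : ℝ) < r := hr
    rw [Function.comp_def, deriv_smul_eq_inv_mul_lineDeriv g _ hr0.ne', norm_smul, hω, mul_one,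
      Real.norm_of_nonneg hr0.le, smul_eq_mul, ← pow_sub_one_mul Module.finrank_pos.ne' r]
    field_simp
  rw [integral_congr_ae hline, integral_eq_integral_toSphere
    ((integrable_inv_norm_pow_mul_fderiv_self hg hgc).congr hline)]
  simp_rw [hray]
  rw [integral_const, Measure.toSphere_real_apply_univ, smul_eq_mul, mul_neg]

end Radial

/-! ### The Jacobian pairing of a current -/

set_option maxSynthPendingDepth 3 in
lemma integrable_clm_apply₂_fderiv {E F : Type*} [NormedAddCommGroup E] [NormedSpace ℝ E]
    [FiniteDimensional ℝ E] [MeasurableSpace E] [BorelSpace E] [NormedAddCommGroup F]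
    [NormedSpace ℝ F] {μ : Measure E} {g : E → ℝ} {L : ℝ≥0} {a : E → F}
    (B : F →L[ℝ] (E →L[ℝ] ℝ) →L[ℝ] ℝ) (hg : LipschitzWith L g)
    (ha : IntegrableOn a (tsupport g) μ) : Integrable (fun z => B (a z) (fderiv ℝ g z)) μ := by
  have hsupp : Function.support (fun z => B (a z) (fderiv ℝ g z)) ⊆ tsupport g := fun z hz =>
    support_fderiv_subset ℝ fun h => hz (by simp [h])
  refine (integrableOn_iff_integrable_of_support_subset hsupp).1
    (((ha.norm.const_mul ‖B‖).mul_const (L : ℝ)).mono'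
      (B.aestronglyMeasurable_comp₂ ha.aestronglyMeasurable
        (measurable_fderiv ℝ g).aestronglyMeasurable) (ae_of_all _ fun z => ?_))
  exact (B.le_opNorm₂ _ _).trans (by gcongr; exact norm_fderiv_le_of_lipschitz ℝ hg)

set_option maxSynthPendingDepth 3 in
lemma hasSum_integral_clm_apply₂_fderiv {ι E F : Type*} [Countable ι] [NormedAddCommGroup E]
    [NormedSpace ℝ E] [FiniteDimensional ℝ E] [MeasurableSpace E] [BorelSpace E]
    [NormedAddCommGroup F] [NormedSpace ℝ F] [CompleteSpace F] {μ : Measure E} {g : E → ℝ}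
    {L : ℝ≥0} {a : ι → E → F} (B : F →L[ℝ] (E →L[ℝ] ℝ) →L[ℝ] ℝ) (hg : LipschitzWith L g)
    (ha : ∀ i, Integrable (a i) μ) (hs : Summable fun i => ∫ z, ‖a i z‖ ∂μ) :
    HasSum (fun i => ∫ z, B (a i z) (fderiv ℝ g z) ∂μ)
      (∫ z, B (∑' i, a i z) (fderiv ℝ g z) ∂μ) := by
  have hint : ∀ i, Integrable (fun z => B (a i z) (fderiv ℝ g z)) μ := fun i =>
    integrable_clm_apply₂_fderiv B hg (ha i).integrableOn
  have hle : ∀ i, ∫ z, ‖B (a i z) (fderiv ℝ g z)‖ ∂μ ≤ ‖B‖ * L * ∫ z, ‖a i z‖ ∂μ := fun i => by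
    rw [← integral_const_mul]
    refine integral_mono (hint i).norm ((ha i).norm.const_mul _) fun z => ?_
    calc ‖B (a i z) (fderiv ℝ g z)‖ ≤ ‖B‖ * ‖a i z‖ * ‖fderiv ℝ g z‖ := B.le_opNorm₂ _ _
      _ ≤ ‖B‖ * ‖a i z‖ * L := by gcongr; exact norm_fderiv_le_of_lipschitz ℝ hg
      _ = ‖B‖ * L * ‖a i z‖ := by ring
  have hsum := hasSum_integral_of_summable_integral_norm hint
    ((hs.mul_left _).of_nonneg_of_le (fun i => integral_nonneg fun z => norm_nonneg _) hle)
  have heq : ∫ z, B (∑' i, a i z) (fderiv ℝ g z) ∂μ =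
      ∫ z, ∑' i, B (a i z) (fderiv ℝ g z) ∂μ := integral_congr_ae <| by
    filter_upwards [ae_summable_norm ha hs] with z hz
    exact ContinuousLinearMap.map_tsum (B.flip (fderiv ℝ g z)) hz.of_norm
  exact heq ▸ hsum

/-- The wedge product `a ∧ b` of two covectors of the plane. -/
def wedge : (R2 →L[ℝ] ℝ) →L[ℝ] (R2 →L[ℝ] ℝ) →L[ℝ] ℝ :=
  (ContinuousLinearMap.apply ℝ ℝ (EuclideanSpace.single 0 1)).smulRight
      (ContinuousLinearMap.apply ℝ ℝ (EuclideanSpace.single 1 1)) -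
    (ContinuousLinearMap.apply ℝ ℝ (EuclideanSpace.single 1 1)).smulRight
      (ContinuousLinearMap.apply ℝ ℝ (EuclideanSpace.single 0 1))

lemma wedge_apply (a b : R2 →L[ℝ] ℝ) :
    wedge a b = a (EuclideanSpace.single 0 1) * b (EuclideanSpace.single 1 1) -
      a (EuclideanSpace.single 1 1) * b (EuclideanSpace.single 0 1) :=
  rfl

/-- The pairing `φ ↦ (1/2) ∫_Ω a ∧ dφ`, which is `φ ↦ ⟨Det(∇u), φ⟩` when `a` is the current
`u₁ du₂ - u₂ du₁`. -/
def jacobianPairing (Ω : Set R2) (a : R2 → R2 →L[ℝ] ℝ) (φ : R2 → ℝ) : ℝ :=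
  (1 / 2) * ∫ z in Ω, wedge (a z) (fderiv ℝ φ z)

section JacobianPairing

variable {Ω : Set R2} {a b : R2 → R2 →L[ℝ] ℝ} {g η : R2 → ℝ} {L : ℝ≥0}

lemma jacobianPairing_congr (h : ∀ᵐ z ∂volume.restrict Ω, a z = b z) :
    jacobianPairing Ω a g = jacobianPairing Ω b g := by
  rw [jacobianPairing, jacobianPairing,
    integral_congr_ae (h.mono fun z hz => by rw [hz] : _ =ᵐ[_] fun z => wedge (b z) _)]

lemma jacobianPairing_add (hg : LipschitzWith L g)
    (ha : IntegrableOn a (tsupport g) (volume.restrict Ω))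
    (hb : IntegrableOn b (tsupport g) (volume.restrict Ω)) :
    jacobianPairing Ω (fun z => a z + b z) g =
      jacobianPairing Ω a g + jacobianPairing Ω b g := by
  simp only [jacobianPairing, map_add, add_apply]
  rw [integral_add (integrable_clm_apply₂_fderiv wedge hg ha)
    (integrable_clm_apply₂_fderiv wedge hg hb), mul_add]

lemma jacobianPairing_sub (hg : LipschitzWith L g)
    (ha : IntegrableOn a (tsupport g) (volume.restrict Ω))
    (hb : IntegrableOn b (tsupport g) (volume.restrict Ω)) :
    jacobianPairing Ω (fun z => a z - b z) g =
      jacobianPairing Ω a g - jacobianPairing Ω b g := by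
  have hadd := jacobianPairing_add hg (ha.sub hb) hb
  simp only [Pi.sub_apply, sub_add_cancel] at hadd
  exact (sub_eq_of_eq_add hadd).symm

lemma hasSum_jacobianPairing {ι : Type*} [Countable ι] {a : ι → R2 → R2 →L[ℝ] ℝ}
    (hg : LipschitzWith L g) (ha : ∀ i, IntegrableOn (a i) Ω)
    (hs : Summable fun i => ∫ z in Ω, ‖a i z‖) :
    HasSum (fun i => jacobianPairing Ω (a i) g)
      (jacobianPairing Ω (fun z => ∑' i, a i z) g) :=
  (hasSum_integral_clm_apply₂_fderiv wedge hg ha hs).mul_left (1 / 2)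

lemma jacobianPairing_indicator (hΩ : IsOpen Ω) (a : R2 → R2 →L[ℝ] ℝ) (φ : R2 → ℝ) :
    jacobianPairing Ω a (Ω.indicator φ) = jacobianPairing Ω a φ := by
  rw [jacobianPairing, jacobianPairing]
  congr 1
  refine setIntegral_congr_fun hΩ.measurableSet fun z hz => ?_
  rw [Filter.EventuallyEq.fderiv_eq (f := φ)]
  filter_upwards [hΩ.mem_nhds hz] with y hy using indicator_of_mem hy φ

lemma jacobianPairing_univ (hΩ : MeasurableSet Ω) (hg : LipschitzWith L g) (h0 : EqOn g 0 Ωᶜ) :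
    jacobianPairing univ a g = jacobianPairing Ω a g := by
  rw [jacobianPairing, jacobianPairing, Measure.restrict_univ,
    setIntegral_eq_integral_of_ae_compl_eq_zero]
  filter_upwards [ae_fderiv_eq_zero_of_eqOn_zero hg hΩ.compl h0] with z hz hzΩ
  rw [hz hzΩ, map_zero]

lemma jacobianPairing_univ_fderiv (hη : ContDiff ℝ 2 η) (hg : LipschitzWith L g)
    (hgc : HasCompactSupport g) : jacobianPairing univ (fderiv ℝ η) g = 0 := by
  have hint : ∀ e f, Integrable fun z => fderiv ℝ η z e * fderiv ℝ g z f := fun e f =>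
    integrable_clm_apply₂_fderiv
      ((ContinuousLinearMap.apply ℝ ℝ e).smulRight (ContinuousLinearMap.apply ℝ ℝ f)) hg
      ((hη.continuous_fderiv two_ne_zero).locallyIntegrable.integrableOn_isCompact hgc)
  simp only [jacobianPairing, Measure.restrict_univ, wedge_apply]
  rw [integral_sub (hint _ _) (hint _ _), integral_fderiv_mul_fderiv_comm hη hg hgc, sub_self,
    mul_zero]

end JacobianPairing

/-! ### Vortices -/

/-- The identification of `ℝ²` with `ℂ`. -/
def toComplex : R2 ≃ₗᵢ[ℝ] ℂ := Complex.orthonormalBasisOneI.repr.symm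

lemma toComplex_apply (z : R2) : toComplex z = z 0 + z 1 * Complex.I := rfl

@[simp] lemma toComplex_re (z : R2) : (toComplex z).re = z 0 := by simp [toComplex_apply]

@[simp] lemma toComplex_im (z : R2) : (toComplex z).im = z 1 := by simp [toComplex_apply]

/-- The closed form `Im (dz / (z - p))`, differential of the angle around `p`. -/
def angularForm (p z : R2) : R2 →L[ℝ] ℝ :=
  Complex.imCLM ∘L ((toComplex (z - p))⁻¹ • (toComplex : R2 →L[ℝ] ℂ))

lemma norm_angularForm_le (p z : R2) : ‖angularForm p z‖ ≤ ‖z - p‖⁻¹ := by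
  refine (ContinuousLinearMap.opNorm_comp_le _ _).trans ?_
  rw [Complex.imCLM_norm, one_mul, norm_smul, norm_inv, LinearIsometryEquiv.norm_map]
  exact mul_le_of_le_one_right (by positivity)
    toComplex.toLinearIsometry.norm_toContinuousLinearMap_le

lemma wedge_angularForm (p z : R2) (b : R2 →L[ℝ] ℝ) :
    wedge (angularForm p z) b = -((‖z - p‖ ^ 2)⁻¹ * b (z - p)) := by
  have hb : b (z - p) = (z - p) 0 * b (EuclideanSpace.single 0 1) +
      (z - p) 1 * b (EuclideanSpace.single 1 1) := by
    conv_lhs => rw [← (EuclideanSpace.basisFun (Fin 2) ℝ).sum_repr (z - p)]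
    simp
  have hn : Complex.normSq (toComplex (z - p)) = ‖z - p‖ ^ 2 := by
    rw [Complex.normSq_eq_norm_sq, LinearIsometryEquiv.norm_map]
  rw [wedge_apply, hb]
  simp [angularForm, hn, -map_sub, -PiLp.sub_apply]
  ring

lemma jacobianPairing_univ_angularForm (p : R2) {g : R2 → ℝ} {L : ℝ≥0} (hg : LipschitzWith L g)
    (hgc : HasCompactSupport g) : jacobianPairing univ (angularForm p) g = Real.pi * g p := by
  have hball : (volume : Measure R2).real (ball 0 1) = Real.pi := by
    simp [Measure.real, Real.pi_nonneg]
  have hradial := integral_inv_norm_pow_mul_fderiv_self (μ := (volume : Measure R2))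
    (g := fun z => g (z + p)) (hg.comp (isometry_add_right p).lipschitz)
    (hgc.comp_homeomorph (Homeomorph.addRight p))
  have hshift := integral_sub_right_eq_self (μ := (volume : Measure R2))
    (fun z => (‖z‖ ^ 2)⁻¹ * fderiv ℝ g (z + p) z) p
  simp only [sub_add_cancel] at hshift
  simp only [fderiv_comp_add_right, finrank_euclideanSpace_fin, hball, zero_add,
    Nat.cast_ofNat] at hradial
  simp only [jacobianPairing, Measure.restrict_univ, wedge_angularForm]
  rw [integral_neg, hshift, hradial]
  ring

lemma integrableOn_inv_norm_sub (p : R2) {Ω : Set R2} (hΩ : Bornology.IsBounded Ω) :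
    IntegrableOn (fun z => ‖z - p‖⁻¹) Ω := by
  obtain ⟨R, -, hR⟩ := hΩ.subset_ball_lt 0 p
  simpa using (integrableOn_ball_inv_norm_pow (μ := volume) p R).mono_set hR

lemma measurable_angularForm (p : R2) : Measurable (angularForm p) := by
  have hinv : Measurable fun z : R2 => (toComplex (z - p))⁻¹ :=
    (toComplex.continuous.measurable.comp (measurable_sub_const p)).inv
  exact ((ContinuousLinearMap.compL ℝ R2 ℂ ℝ Complex.imCLM).continuous.comp
    (continuous_id.smul continuous_const)).measurable.comp hinv

lemma integrableOn_angularForm (p : R2) {Ω : Set R2} (hΩ : Bornology.IsBounded Ω) :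
    IntegrableOn (angularForm p) Ω :=
  (integrableOn_inv_norm_sub p hΩ).mono' (measurable_angularForm p).aestronglyMeasurable
    (ae_of_all _ (norm_angularForm_le p))

/-- The phase `q / |q|` of a complex number `q`, with value `1` at `q = 0`. -/
def phase (q : ℂ) : ℂ := Complex.exp (q.arg * Complex.I)

lemma norm_phase (q : ℂ) : ‖phase q‖ = 1 := Complex.norm_exp_ofReal_mul_I _

lemma phase_eq_smul {q : ℂ} (hq : q ≠ 0) : phase q = ‖q‖⁻¹ • q := by
  rw [eq_inv_smul_iff₀ (norm_ne_zero_iff.2 hq), Complex.real_smul]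
  exact Complex.norm_mul_exp_arg_mul_I q

lemma phase_mul {q r : ℂ} (hq : q ≠ 0) (hr : r ≠ 0) : phase (q * r) = phase q * phase r := by
  rw [phase_eq_smul hq, phase_eq_smul hr, phase_eq_smul (mul_ne_zero hq hr), norm_mul, mul_inv,
    smul_mul_smul_comm]

lemma phase_mul_star_self (q : ℂ) : phase q * star (phase q) = 1 := by
  rw [Complex.star_def, Complex.mul_conj, Complex.normSq_eq_norm_sq, norm_phase]
  simp

lemma hasPhaseFDerivAt_phase {q : ℂ} (hq : q ≠ 0) :
    HasPhaseFDerivAt phase (Complex.imCLM ∘L (q⁻¹ • ContinuousLinearMap.id ℝ ℂ)) q := by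
  have hlocal : phase =ᶠ[𝓝 q] fun r =>
      phase q * Complex.exp ((Complex.log (q⁻¹ * r)).im * Complex.I) := by
    filter_upwards [isOpen_ne.mem_nhds hq] with r hr
    rw [Complex.log_im, ← phase, ← phase_mul hq (mul_ne_zero (inv_ne_zero hq) hr),
      mul_inv_cancel_left₀ hq]
  have hmul : q⁻¹ * q = 1 := inv_mul_cancel₀ hq
  have hlog : HasFDerivAt Complex.log (1 : ℂ →L[ℝ] ℂ) (q⁻¹ * q) := by
    simpa [hmul] using
      (Complex.hasStrictFDerivAt_log_real (x := q⁻¹ * q) (by simp [hmul])).hasFDerivAt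
  have harg : HasFDerivAt (fun r => (Complex.log (q⁻¹ * r)).im) _ q :=
    Complex.imCLM.hasFDerivAt.comp q (hlog.comp q ((hasFDerivAt_id q).const_mul q⁻¹))
  have hexp := (((Complex.ofRealCLM.hasFDerivAt.comp q harg).mul_const Complex.I).cexp).const_mul
    (phase q)
  refine (hexp.congr_of_eventuallyEq hlocal).congr_fderiv ?_
  have hone : Complex.exp ((Complex.ofRealCLM ∘ fun r => (Complex.log (q⁻¹ * r)).im) q *
      Complex.I) = 1 := by
    simp [hmul]
  rw [hone, one_smul]
  refine ContinuousLinearMap.ext fun e => ?_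
  simp [mul_comm]

lemma contDiffOn_phase : ContDiffOn ℝ (⊤ : ℕ∞) phase {0}ᶜ := by
  have hsmul : ContDiffOn ℝ (⊤ : ℕ∞) (fun q : ℂ => ‖q‖⁻¹ • q) {0}ᶜ :=
    ((contDiffOn_id.norm ℝ fun _ hq => hq).inv fun _ hq =>
      norm_ne_zero_iff.2 (show _ ≠ (0 : ℂ) from hq)).smul contDiffOn_id
  exact hsmul.congr fun q => phase_eq_smul

lemma hasFDerivAt_toComplex_sub (p z : R2) :
    HasFDerivAt (fun z => toComplex (z - p)) (toComplex : R2 →L[ℝ] ℂ) z := by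
  simpa only [map_sub] using toComplex.hasFDerivAt.sub_const (toComplex p)

/-- The vortex `(z - p) / |z - p|` at `p`. -/
def vortex (p z : R2) : ℂ := phase (toComplex (z - p))

lemma hasPhaseFDerivAt_vortex {p z : R2} (hz : z ≠ p) :
    HasPhaseFDerivAt (vortex p) (angularForm p z) z := by
  have hq : toComplex (z - p) ≠ 0 := by simpa [sub_eq_zero] using hz
  refine (HasFDerivAt.comp z (hasPhaseFDerivAt_phase hq)
    (hasFDerivAt_toComplex_sub p z)).congr_fderiv ?_
  refine ContinuousLinearMap.ext fun e => ?_
  simp [angularForm, vortex, -map_sub]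

lemma isPhaseFactor_vortex (p : R2) {Ω : Set R2} (hΩ : Bornology.IsBounded Ω) :
    IsPhaseFactor Ω (vortex p) (angularForm p) := by
  refine .of_contDiffOn_compl_singleton (p := p) ?_ (fun z _ => norm_phase _)
    (fun z => hasPhaseFDerivAt_vortex) (integrableOn_angularForm p hΩ)
    (integrableOn_inv_norm_sub p hΩ)
  refine contDiffOn_phase.comp
    (toComplex.contDiff.comp (contDiff_id.sub contDiff_const)).contDiffOn fun z hz => ?_
  simpa [sub_eq_zero] using hz

/-! ### Dipoles -/

/-- A smooth cutoff, equal to `1` on the disc of radius `2` and to `0` off the disc of radius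
`3`. -/
def dipoleCutoff : ContDiffBump (0 : ℂ) := ⟨2, 3, by norm_num, by norm_num⟩

/-- A smooth function on `ℂ` that equals `-arg (1 + 1/ζ)` far from the origin, where it undoes the
phase of the pair of vortices of degrees `1` at `-1` and `-1` at `0`. -/
def dipoleProfile (ζ : ℂ) : ℝ := -((1 - dipoleCutoff ζ) * (1 + ζ⁻¹).arg)

lemma dipoleProfile_of_norm_le {ζ : ℂ} (hζ : ‖ζ‖ ≤ 2) : dipoleProfile ζ = 0 := by
  simp [dipoleProfile, dipoleCutoff.one_of_mem_closedBall (mem_closedBall_zero_iff.2 hζ)]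

lemma dipoleProfile_of_le_norm {ζ : ℂ} (hζ : 3 ≤ ‖ζ‖) : dipoleProfile ζ = -(1 + ζ⁻¹).arg := by
  simp [dipoleProfile, dipoleCutoff.zero_of_le_dist (x := ζ) (by rwa [dist_zero_right])]

lemma one_add_inv_mem_slitPlane {ζ : ℂ} (hζ : 1 < ‖ζ‖) : 1 + ζ⁻¹ ∈ Complex.slitPlane :=
  Complex.mem_slitPlane_of_norm_lt_one (by rw [norm_inv]; exact inv_lt_one_of_one_lt₀ hζ)

lemma contDiff_dipoleProfile : ContDiff ℝ (⊤ : ℕ∞) dipoleProfile := by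
  refine contDiff_iff_contDiffAt.2 fun ζ => ?_
  rcases lt_or_ge 1 ‖ζ‖ with hζ | hζ
  · have hinv : ContDiffAt ℝ (⊤ : ℕ∞) (fun ζ : ℂ => 1 + ζ⁻¹) ζ :=
      contDiffAt_const.add (contDiffAt_inv ℝ (norm_pos_iff.1 (one_pos.trans hζ)))
    have harg : ContDiffAt ℝ (⊤ : ℕ∞) (fun ζ : ℂ => (1 + ζ⁻¹).arg) ζ := by
      simp only [← Complex.log_im]
      exact Complex.imCLM.contDiff.contDiffAt.comp ζ
        (((Complex.contDiffAt_log (one_add_inv_mem_slitPlane hζ)).restrict_scalars ℝ).comp ζ hinv)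
    exact ((contDiffAt_const.sub dipoleCutoff.contDiffAt).mul harg).neg
  · refine (contDiffAt_const (c := (0 : ℝ))).congr_of_eventuallyEq ?_
    filter_upwards [continuous_norm.continuousAt.eventually_lt_const (hζ.trans_lt one_lt_two)]
      with ξ hξ using dipoleProfile_of_norm_le hξ.le

/-- The correction of the phase of the pair of vortices of degrees `1` at `x` and `-1` at `y`. If
`x = y`, division by zero makes it vanish identically, and `dipole x x = 1`. -/
def dipolePhase (x y z : R2) : ℝ := dipoleProfile (toComplex (z - y) / toComplex (y - x))

/-- A map with values in `S¹` that has vortices of degrees `1` at `x` and `-1` at `y`, and is equal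
to `1` far from them. -/
def dipole (x y z : R2) : ℂ :=
  vortex x z * star (vortex y z) * Complex.exp (dipolePhase x y z * Complex.I)

/-- The differential of the phase of `dipole x y`. -/
def dipoleCurrent (x y z : R2) : R2 →L[ℝ] ℝ :=
  angularForm x z - angularForm y z + fderiv ℝ (dipolePhase x y) z

lemma norm_toComplex_div (x y z : R2) :
    ‖toComplex (z - y) / toComplex (y - x)‖ = dist z y / dist x y := by
  rw [norm_div, LinearIsometryEquiv.norm_map, LinearIsometryEquiv.norm_map, ← dist_eq_norm,
    ← dist_eq_norm, dist_comm y x]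

lemma contDiff_dipolePhase (x y : R2) : ContDiff ℝ (⊤ : ℕ∞) (dipolePhase x y) :=
  contDiff_dipoleProfile.comp
    ((toComplex.contDiff.comp (contDiff_id.sub contDiff_const)).div_const _)

lemma integrableOn_fderiv_dipolePhase (x y : R2) {Ω : Set R2} (hΩ : Bornology.IsBounded Ω) :
    IntegrableOn (fderiv ℝ (dipolePhase x y)) Ω :=
  (((contDiff_dipolePhase x y).continuous_fderiv (by simp)).locallyIntegrable.integrableOn_isCompact
    hΩ.isCompact_closure).mono_set subset_closure

lemma dipole_self (x z : R2) : dipole x x z = 1 := by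
  rw [dipole, vortex, phase_mul_star_self, dipolePhase, dipoleProfile_of_norm_le (by simp)]
  simp

lemma dipoleCurrent_self (x z : R2) : dipoleCurrent x x z = 0 := by
  have hconst : dipolePhase x x = fun _ => dipoleProfile 0 := by
    funext z
    simp [dipolePhase]
  simp [dipoleCurrent, hconst]

lemma dipole_eq_one {x y z : R2} (hz : 3 * dist x y ≤ dist z y) : dipole x y z = 1 := by
  rcases eq_or_ne x y with rfl | hxy
  · exact dipole_self x z
  have hζ : 3 ≤ ‖toComplex (z - y) / toComplex (y - x)‖ := by
    rwa [norm_toComplex_div, le_div_iff₀ (dist_pos.2 hxy)]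
  have hy0 : toComplex (z - y) ≠ 0 := fun h => by simp [h] at hζ; linarith
  set q := 1 + (toComplex (z - y) / toComplex (y - x))⁻¹ with hq
  have hq0 : q ≠ 0 := Complex.slitPlane_ne_zero (one_add_inv_mem_slitPlane (by linarith))
  have hzx : toComplex (z - x) = toComplex (z - y) * q := by
    rw [hq, inv_div, mul_add, mul_one, mul_div_cancel₀ _ hy0, ← map_add, sub_add_sub_cancel]
  have hexp : Complex.exp (dipolePhase x y z * Complex.I) = star (phase q) := by
    rw [dipolePhase, dipoleProfile_of_le_norm hζ, phase, Complex.star_def, ← Complex.exp_conj]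
    simp [hq]
  rw [dipole, hexp, vortex, vortex, hzx, phase_mul hy0 hq0, mul_right_comm,
    mul_assoc (phase _), phase_mul_star_self, mul_one, phase_mul_star_self]

lemma hasPhaseFDerivAt_dipole {x y z : R2} (hx : z ≠ x) (hy : z ≠ y) :
    HasPhaseFDerivAt (dipole x y) (dipoleCurrent x y z) z := by
  have hη : HasFDerivAt (dipolePhase x y) (fderiv ℝ (dipolePhase x y) z) z :=
    ((contDiff_dipolePhase x y).differentiable (by simp) z).hasFDerivAt
  rw [dipoleCurrent, sub_eq_add_neg]
  exact ((hasPhaseFDerivAt_vortex hx).mul (hasPhaseFDerivAt_vortex hy).conj).mul (.exp hη)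

lemma dipoleCurrent_eq_zero {x y z : R2} (hz : 4 * dist x y ≤ dist z y) :
    dipoleCurrent x y z = 0 := by
  rcases eq_or_ne x y with rfl | hxy
  · exact dipoleCurrent_self x z
  have hd := dist_pos.2 hxy
  have hzx : z ≠ x := by
    rintro rfl
    linarith
  refine (hasPhaseFDerivAt_dipole hzx (dist_pos.1 (by linarith))).eq_zero_of_eventuallyEq_one ?_
  have hfar : ∀ᶠ z' in 𝓝 z, 3 * dist x y < dist z' y :=
    (continuous_id.dist continuous_const).continuousAt.eventually_const_lt
      (show _ < dist z y by linarith)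
  exact hfar.mono fun z' hz' => dipole_eq_one hz'.le

lemma isPhaseFactor_dipole (x y : R2) {Ω : Set R2} (hΩ : Bornology.IsBounded Ω) :
    IsPhaseFactor Ω (dipole x y) (dipoleCurrent x y) := by
  have hη := contDiff_dipolePhase x y
  have hexp : IsPhaseFactor Ω (fun z => Complex.exp (dipolePhase x y z * Complex.I))
      (fderiv ℝ (dipolePhase x y)) := by
    exact .of_contDiff ((Complex.ofRealCLM.contDiff.comp hη).mul contDiff_const).cexp
      (fun z => Complex.norm_exp_ofReal_mul_I _)
      (fun z => .exp (hη.differentiable (by simp) z).hasFDerivAt)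
      (integrableOn_fderiv_dipolePhase x y hΩ)
  have hcurrent : dipoleCurrent x y =
      fun z => angularForm x z + -angularForm y z + fderiv ℝ (dipolePhase x y) z := by
    funext z
    rw [dipoleCurrent, sub_eq_add_neg]
  rw [hcurrent]
  exact ((isPhaseFactor_vortex x hΩ).mul (isPhaseFactor_vortex y hΩ).conj).mul hexp

lemma exists_norm_fderiv_dipolePhase_le :
    ∃ K : ℝ, ∀ x y z : R2, dist z y ≤ 4 * dist x y →
      ‖fderiv ℝ (dipolePhase x y) z‖ ≤ K * (dist x y)⁻¹ := by
  obtain ⟨K, hK⟩ := (isCompact_closedBall (0 : ℂ) 4).exists_bound_of_continuousOn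
    (contDiff_dipoleProfile.continuous_fderiv (by simp)).continuousOn
  refine ⟨K, fun x y z hz => ?_⟩
  set c := toComplex (y - x) with hc
  have hball : toComplex (z - y) / c ∈ closedBall (0 : ℂ) 4 := by
    rw [mem_closedBall_zero_iff, norm_toComplex_div]
    exact div_le_of_le_mul₀ dist_nonneg (by norm_num) hz
  have hlin : HasFDerivAt (fun z => toComplex (z - y) / c) (c⁻¹ • (toComplex : R2 →L[ℝ] ℂ)) z := by
    simpa only [div_eq_inv_mul] using (hasFDerivAt_toComplex_sub y z).const_mul c⁻¹
  have hprofile := (contDiff_dipoleProfile.differentiable (by simp) (toComplex (z - y) / c))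
  have hnorm : ‖c⁻¹ • (toComplex : R2 →L[ℝ] ℂ)‖ ≤ (dist x y)⁻¹ := by
    rw [norm_smul, norm_inv, hc, LinearIsometryEquiv.norm_map, ← dist_eq_norm, dist_comm]
    exact mul_le_of_le_one_right (by positivity)
      toComplex.toLinearIsometry.norm_toContinuousLinearMap_le
  have hderiv : fderiv ℝ (dipolePhase x y) z = _ := (hprofile.hasFDerivAt.comp z hlin).fderiv
  rw [hderiv]
  exact (ContinuousLinearMap.opNorm_comp_le _ _).trans
    (mul_le_mul (hK _ hball) hnorm (norm_nonneg _) ((norm_nonneg _).trans (hK _ hball)))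

lemma integrable_dipoleCurrent (x y : R2) : Integrable (dipoleCurrent x y) := by
  have hsupp : Function.support (dipoleCurrent x y) ⊆ ball y (4 * dist x y) := fun z hz => by
    contrapose! hz
    simpa using dipoleCurrent_eq_zero (not_lt.1 hz)
  exact (integrableOn_iff_integrable_of_support_subset hsupp).1
    (((integrableOn_angularForm x isBounded_ball).sub
      (integrableOn_angularForm y isBounded_ball)).add
      (integrableOn_fderiv_dipolePhase x y isBounded_ball))

lemma integral_ball_inv_norm_sub (p : R2) {R : ℝ} (hR : 0 ≤ R) :
    ∫ z in ball p R, ‖z - p‖⁻¹ = 2 * Real.pi * R := by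
  simpa [Measure.real, Real.pi_nonneg] using integral_ball_inv_norm_pow (μ := volume) p hR

lemma norm_dipoleCurrent_le (x y z : R2) :
    ‖dipoleCurrent x y z‖ ≤ ‖z - x‖⁻¹ + ‖z - y‖⁻¹ + ‖fderiv ℝ (dipolePhase x y) z‖ :=
  (norm_add_le _ _).trans (add_le_add_left ((norm_sub_le _ _).trans
    (add_le_add (norm_angularForm_le x z) (norm_angularForm_le y z))) _)

lemma exists_integral_norm_dipoleCurrent_le :
    ∃ C : ℝ, ∀ x y : R2, ∫ z, ‖dipoleCurrent x y z‖ ≤ C * dist x y := by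
  obtain ⟨K, hK⟩ := exists_norm_fderiv_dipolePhase_le
  refine ⟨(18 + 16 * K) * Real.pi, fun x y => ?_⟩
  set d := dist x y with hd
  have hd0 : 0 ≤ d := dist_nonneg
  have hsub : ball y (4 * d) ⊆ ball x (5 * d) :=
    ball_subset_ball' (by rw [dist_comm y x, ← hd]; linarith)
  have hix : IntegrableOn (fun z => ‖z - x‖⁻¹) (ball x (5 * d)) :=
    integrableOn_inv_norm_sub x isBounded_ball
  have hiy : IntegrableOn (fun z => ‖z - y‖⁻¹) (ball y (4 * d)) :=
    integrableOn_inv_norm_sub y isBounded_ball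
  have hiK : IntegrableOn (fun _ : R2 => K * d⁻¹) (ball y (4 * d)) :=
    integrableOn_const measure_ball_lt_top.ne
  calc ∫ z, ‖dipoleCurrent x y z‖
      = ∫ z in ball y (4 * d), ‖dipoleCurrent x y z‖ :=
        (setIntegral_eq_integral_of_forall_compl_eq_zero fun z hz => by
          rw [dipoleCurrent_eq_zero (not_lt.1 hz), norm_zero]).symm
    _ ≤ ∫ z in ball y (4 * d), (‖z - x‖⁻¹ + ‖z - y‖⁻¹ + K * d⁻¹) :=
        setIntegral_mono_on (integrable_dipoleCurrent x y).norm.integrableOn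
          (((hix.mono_set hsub).add hiy).add hiK) measurableSet_ball fun _ hz =>
            (norm_dipoleCurrent_le x y _).trans (by gcongr; exact hK x y _ (mem_ball.1 hz).le)
    _ = (∫ z in ball y (4 * d), ‖z - x‖⁻¹) + (∫ z in ball y (4 * d), ‖z - y‖⁻¹) +
          ∫ _ in ball y (4 * d), K * d⁻¹ := by
        rw [← integral_add (hix.mono_set hsub) hiy, ← integral_add _ hiK]
        exact (hix.mono_set hsub).add hiy
    _ ≤ 2 * Real.pi * (5 * d) + 2 * Real.pi * (4 * d) + Real.pi * (4 * d) ^ 2 * (K * d⁻¹) := by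
        gcongr
        · exact (setIntegral_mono_set hix (ae_of_all _ fun _ => by positivity)
            hsub.eventuallyLE).trans (integral_ball_inv_norm_sub x (by positivity)).le
        · exact (integral_ball_inv_norm_sub y (by positivity)).le
        · exact le_of_eq (by simp [Measure.real, hd0, Real.pi_nonneg, mul_comm])
    _ = (18 + 16 * K) * Real.pi * d := by
        rcases hd0.eq_or_lt with hd0 | hd0
        · simp [← hd0]
        · field_simp
          ring

lemma jacobianPairing_univ_dipoleCurrent (x y : R2) {g : R2 → ℝ} {L : ℝ≥0}
    (hg : LipschitzWith L g) (hgc : HasCompactSupport g) :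
    jacobianPairing univ (dipoleCurrent x y) g = Real.pi * (g x - g y) := by
  have hbdd := hgc.isCompact.isBounded
  have hform : ∀ p, IntegrableOn (angularForm p) (tsupport g) (volume.restrict univ) := fun p => by
    simpa using integrableOn_angularForm p hbdd
  have hη : IntegrableOn (fderiv ℝ (dipolePhase x y)) (tsupport g) (volume.restrict univ) := by
    simpa using integrableOn_fderiv_dipolePhase x y hbdd
  calc jacobianPairing univ (dipoleCurrent x y) g
      = jacobianPairing univ (angularForm x) g - jacobianPairing univ (angularForm y) g +
          jacobianPairing univ (fderiv ℝ (dipolePhase x y)) g := by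
        rw [← jacobianPairing_sub hg (hform x) (hform y)]
        exact jacobianPairing_add hg ((hform x).sub (hform y)) hη
    _ = Real.pi * (g x - g y) := by
        rw [jacobianPairing_univ_angularForm x hg hgc, jacobianPairing_univ_angularForm y hg hgc,
          jacobianPairing_univ_fderiv (contDiff_infty.1 (contDiff_dipolePhase x y) 2) hg hgc]
        ring

/-! ### Series of dipoles -/

lemma ae_eventually_lt_dist {E : Type*} [NormedAddCommGroup E] [NormedSpace ℝ E]
    [FiniteDimensional ℝ E] [MeasurableSpace E] [BorelSpace E] (μ : Measure E)
    [μ.IsAddHaarMeasure] {q : ℕ → E} {r : ℕ → ℝ} (hr : ∀ i, 0 ≤ r i)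
    (hs : Summable fun i => r i ^ Module.finrank ℝ E) :
    ∀ᵐ z ∂μ, ∀ᶠ i in atTop, r i < dist z (q i) := by
  have hfin : ∑' i, μ (closedBall (q i) (r i)) ≠ ∞ := by
    simp only [Measure.addHaar_closedBall μ _ (hr _), ENNReal.tsum_mul_right]
    exact ENNReal.mul_ne_top hs.tsum_ofReal_ne_top measure_ball_lt_top.ne
  filter_upwards [ae_eventually_notMem hfin] with z hz
  exact hz.mono fun i hi => not_le.1 hi

section DipoleSeries

variable {Ω : Set R2} {x y : ℕ → R2} (hs : Summable fun i => dist (x i) (y i))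

include hs

lemma ae_eventually_dipole_eq_one :
    ∀ᵐ z, ∀ᶠ i in atTop, dipole (x i) (y i) z = 1 := by
  have hsq : Summable fun i => (3 * dist (x i) (y i)) ^ Module.finrank ℝ R2 := by
    rw [finrank_euclideanSpace_fin]
    refine (hs.mul_left (9 * ∑' i, dist (x i) (y i))).of_nonneg_of_le (fun i => by positivity)
      fun i => ?_
    have := mul_le_mul_of_nonneg_right (hs.le_tsum i fun _ _ => dist_nonneg)
      (dist_nonneg (x := x i) (y := y i))
    linarith
  filter_upwards [ae_eventually_lt_dist volume (fun i => by positivity) hsq] with z hz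
  exact hz.mono fun i hi => dipole_eq_one hi.le

lemma summable_setIntegral_norm_dipoleCurrent (Ω : Set R2) :
    Summable fun i => ∫ z in Ω, ‖dipoleCurrent (x i) (y i) z‖ := by
  obtain ⟨C, hC⟩ := exists_integral_norm_dipoleCurrent_le
  exact (hs.mul_left C).of_nonneg_of_le (fun i => integral_nonneg fun z => norm_nonneg _)
    fun i => (setIntegral_le_integral (integrable_dipoleCurrent _ _).norm
      (ae_of_all _ fun z => norm_nonneg _)).trans (hC _ _)

lemma isPhaseFactor_tprod_dipole (hΩb : Bornology.IsBounded Ω) :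
    IsPhaseFactor Ω (fun z => ∏' i, dipole (x i) (y i) z)
      (fun z => ∑' i, dipoleCurrent (x i) (y i) z) :=
  .tprod (fun _ => isPhaseFactor_dipole _ _ hΩb)
    (fun _ => (integrable_dipoleCurrent _ _).integrableOn)
    (summable_setIntegral_norm_dipoleCurrent hs Ω)
    (ae_restrict_of_ae (ae_eventually_dipole_eq_one hs))

lemma hasSum_jacobianPairing_dipoleCurrent (hΩ : IsOpen Ω) (hΩb : Bornology.IsBounded Ω)
    (hx : ∀ i, x i ∈ closure Ω) (hy : ∀ i, y i ∈ closure Ω) {φ : R2 → ℝ} (hφ : MemLip0 Ω φ) :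
    HasSum (fun i => Real.pi * (φ (x i) - φ (y i)))
      (jacobianPairing Ω (fun z => ∑' i, dipoleCurrent (x i) (y i) z) φ) := by
  obtain ⟨⟨L, hL⟩, h0⟩ := hφ
  have hg := lipschitzWith_indicator hL h0
  have hgc : HasCompactSupport (Ω.indicator φ) :=
    hΩb.isCompact_closure.of_isClosed_subset (isClosed_tsupport _)
      (closure_mono Set.support_indicator_subset)
  have hsum := hasSum_jacobianPairing (Ω := univ) hg
    (fun i => (integrable_dipoleCurrent (x i) (y i)).integrableOn)
    (summable_setIntegral_norm_dipoleCurrent hs univ)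
  rw [jacobianPairing_univ hΩ.measurableSet hg fun z hz => indicator_of_notMem hz φ,
    jacobianPairing_indicator hΩ] at hsum
  simpa only [jacobianPairing_univ_dipoleCurrent _ _ hg hgc,
    indicator_eq_self_of_mem_closure h0 (hx _), indicator_eq_self_of_mem_closure h0 (hy _)]
    using hsum

end DipoleSeries

/-! ### Circle-valued Sobolev maps in real coordinates -/

section Basis

variable {ι E F : Type*} [Finite ι] [NormedAddCommGroup E] [NormedSpace ℝ E]
  [NormedAddCommGroup F] [NormedSpace ℝ F]

lemma integrable_clm_iff_basis [FiniteDimensional ℝ E] {α : Type*} [MeasurableSpace α]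
    {μ : Measure α} (b : Module.Basis ι ℝ E) {V : α → E →L[ℝ] F} :
    Integrable V μ ↔ ∀ i, Integrable (fun z => V z (b i)) μ := by
  refine ⟨fun h i => h.apply_continuousLinearMap _, fun h => ?_⟩
  have := Fintype.ofFinite ι
  let L : (ι → F) →L[ℝ] E →L[ℝ] F := ∑ i, ContinuousLinearMap.smulRightL ℝ E F
    (b.coord i).toContinuousLinearMap ∘L ContinuousLinearMap.proj i
  have hL : ∀ z, L (fun i => V z (b i)) = V z := fun z =>
    ContinuousLinearMap.coe_injective (b.ext fun j => by simp [L, Finsupp.single_apply])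
  exact (L.integrable_comp (Integrable.of_eval h)).congr (ae_of_all _ hL)

lemma HasWeakFDeriv.of_basis [MeasureSpace E] [BorelSpace E] {Ω : Set E} {v : E → F}
    {V : E → E →L[ℝ] F} (b : Module.Basis ι ℝ E)
    (iv : LocallyIntegrable v (volume.restrict Ω)) (iV : LocallyIntegrable V (volume.restrict Ω))
    (h : ∀ φ : E → ℝ, ContDiff ℝ (⊤ : ℕ∞) φ → HasCompactSupport φ → tsupport φ ⊆ Ω →
      ∀ i, ∫ z in Ω, fderiv ℝ φ z (b i) • v z = -∫ z in Ω, φ z • V z (b i)) :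
    HasWeakFDeriv Ω v V := by
  intro φ hφ hφc hφΩ e
  have := Fintype.ofFinite ι
  have ileft : ∀ i, IntegrableOn (fun z => b.repr e i • fderiv ℝ φ z (b i) • v z) Ω := fun i =>
    (integrable_fderiv_apply_smul hφ hφc iv (b i)).smul _
  have iright : ∀ i, IntegrableOn (fun z => b.repr e i • φ z • V z (b i)) Ω := fun i =>
    (integrable_smul_clm_apply hφ.continuous hφc iV (b i)).smul _
  rw [← b.sum_repr e]
  simp only [map_sum, map_smul, Finset.sum_smul, Finset.smul_sum, smul_assoc,
    smul_comm (φ _) (b.repr e _)]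
  rw [integral_finsetSum _ fun i _ => ileft i, integral_finsetSum _ fun i _ => iright i]
  simp only [integral_smul, h φ hφ hφc hφΩ, smul_neg, Finset.sum_neg_distrib]

end Basis

/-- The linear map `ℝ² → ℂ` with matrix `M`. -/
def matrixToComplexCLM : Matrix (Fin 2) (Fin 2) ℝ ≃ₗ[ℝ] (R2 →L[ℝ] ℂ) :=
  (Matrix.toEuclideanCLM (n := Fin 2) (𝕜 := ℝ)).toAlgEquiv.toLinearEquiv ≪≫ₗ
    ((ContinuousLinearEquiv.refl ℝ R2).arrowCongr
      toComplex.toContinuousLinearEquiv).toLinearEquiv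

lemma matrixToComplexCLM_apply_single (M : Matrix (Fin 2) (Fin 2) ℝ) (j : Fin 2) :
    matrixToComplexCLM M (EuclideanSpace.single j 1) = M 0 j + M 1 j * Complex.I := by
  have : matrixToComplexCLM M (EuclideanSpace.single j 1) =
    toComplex (Matrix.toEuclideanCLM (n := Fin 2) (𝕜 := ℝ) M (EuclideanSpace.single j 1)) := rfl
  rw [this, toComplex_apply]
  simp [Matrix.ofLp_toEuclideanCLM]

lemma isWeakGradient_iff {Ω : Set R2} {u : R2 → R2} {G : R2 → Matrix (Fin 2) (Fin 2) ℝ}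
    (hu : IntegrableOn (fun z => toComplex (u z)) Ω)
    (hG : IntegrableOn (fun z => matrixToComplexCLM (G z)) Ω) :
    IsWeakGradient Ω u G ↔
      HasWeakFDeriv Ω (fun z => toComplex (u z)) (fun z => matrixToComplexCLM (G z)) := by
  have key : ∀ φ : R2 → ℝ, ContDiff ℝ (⊤ : ℕ∞) φ → HasCompactSupport φ → ∀ j,
      ((∫ z in Ω, fderiv ℝ φ z (EuclideanSpace.single j 1) • toComplex (u z) =
          -∫ z in Ω, φ z • matrixToComplexCLM (G z) (EuclideanSpace.single j 1)) ↔
        ∀ i, ∫ z in Ω, u z i * fderiv ℝ φ z (EuclideanSpace.single j 1) =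
          -∫ z in Ω, G z i j * φ z) := by
    intro φ hφ hφc j
    have ileft := integrable_fderiv_apply_smul hφ hφc hu.locallyIntegrable
      (EuclideanSpace.single j 1)
    have iright := integrable_smul_clm_apply hφ.continuous hφc hG.locallyIntegrable
      (EuclideanSpace.single j 1)
    rw [Complex.ext_iff, Complex.neg_re, Complex.neg_im, Fin.forall_fin_two]
    simp only [← Complex.reCLM_apply, ← Complex.imCLM_apply,
      ← ContinuousLinearMap.integral_comp_comm _ ileft,
      ← ContinuousLinearMap.integral_comp_comm _ iright]
    simp [matrixToComplexCLM_apply_single, mul_comm]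
  refine ⟨fun h => .of_basis (EuclideanSpace.basisFun (Fin 2) ℝ).toBasis hu.locallyIntegrable
    hG.locallyIntegrable fun φ hφ hφc hφΩ j => ?_, fun h φ hφ hφc hφΩ i j =>
    (key φ hφ hφc j).1 (h φ hφ hφc hφΩ _) i⟩
  simpa using (key φ hφ hφc j).2 fun i => h φ hφ hφc hφΩ i j

lemma integrableOn_matrixToComplexCLM_iff {Ω : Set R2} {G : R2 → Matrix (Fin 2) (Fin 2) ℝ} :
    IntegrableOn (fun z => matrixToComplexCLM (G z)) Ω ↔
      ∀ i j, IntegrableOn (fun z => G z i j) Ω := by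
  rw [IntegrableOn, integrable_clm_iff_basis (EuclideanSpace.basisFun (Fin 2) ℝ).toBasis,
    forall_comm]
  refine forall_congr' fun j => ?_
  rw [← Integrable.re_im_iff, Fin.forall_fin_two]
  simp [matrixToComplexCLM_apply_single, IntegrableOn]

lemma memW11_and_sphereValued_iff {Ω : Set R2} {u : R2 → R2}
    {G : R2 → Matrix (Fin 2) (Fin 2) ℝ} :
    MemW11 Ω u G ∧ SphereValued Ω u ↔
      IsUnimodularW11 Ω (fun z => toComplex (u z)) (fun z => matrixToComplexCLM (G z)) := by
  have hint : IntegrableOn (fun z => toComplex (u z)) Ω ↔ IntegrableOn u Ω :=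
    toComplex.toContinuousLinearEquiv.integrable_comp_iff
  have hnorm : SphereValued Ω u ↔ ∀ᵐ z ∂volume.restrict Ω, ‖toComplex (u z)‖ = 1 := by
    simp only [SphereValued, LinearIsometryEquiv.norm_map]
  constructor
  · rintro ⟨⟨hu, hG, hw⟩, hs⟩
    rw [← hint] at hu
    rw [← integrableOn_matrixToComplexCLM_iff] at hG
    exact ⟨hu, hnorm.1 hs, hG, (isWeakGradient_iff hu hG).1 hw⟩
  · rintro ⟨hu, hs, hG, hw⟩
    exact ⟨⟨hint.1 hu, integrableOn_matrixToComplexCLM_iff.1 hG, (isWeakGradient_iff hu hG).2 hw⟩,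
      hnorm.2 hs⟩

lemma frob_nonneg (M : Matrix (Fin 2) (Fin 2) ℝ) : 0 ≤ frob M := Real.sqrt_nonneg _

lemma frob_le_two_mul_norm (M : Matrix (Fin 2) (Fin 2) ℝ) :
    frob M ≤ 2 * ‖matrixToComplexCLM M‖ := by
  have hcol : ∀ j, M 0 j ^ 2 + M 1 j ^ 2 ≤ ‖matrixToComplexCLM M‖ ^ 2 := fun j => by
    have hle := (matrixToComplexCLM M).le_opNorm (EuclideanSpace.single j 1)
    rw [PiLp.norm_single, norm_one, mul_one, matrixToComplexCLM_apply_single] at hle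
    calc M 0 j ^ 2 + M 1 j ^ 2 = ‖(M 0 j + M 1 j * Complex.I : ℂ)‖ ^ 2 := by
          rw [← Complex.normSq_eq_norm_sq, Complex.normSq_add_mul_I]
      _ ≤ ‖matrixToComplexCLM M‖ ^ 2 := by gcongr
  refine Real.sqrt_le_iff.2 ⟨by positivity, ?_⟩
  simp only [Fin.sum_univ_two]
  nlinarith [hcol 0, hcol 1, sq_nonneg ‖matrixToComplexCLM M‖]

/-! ### The current of a circle-valued map -/

/-- The current `v₁ dv₂ - v₂ dv₁ = Im (v̄ dv)` of a complex-valued map `v` with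
derivative `V`. -/
def current {E : Type*} [NormedAddCommGroup E] [NormedSpace ℝ E] (v : E → ℂ)
    (V : E → E →L[ℝ] ℂ) (z : E) : E →L[ℝ] ℝ :=
  Complex.imCLM ∘L (star (v z) • V z)

lemma detPairing_eq_jacobianPairing (Ω : Set R2) (u : R2 → R2)
    (G : R2 → Matrix (Fin 2) (Fin 2) ℝ) (φ : R2 → ℝ) :
    detPairing Ω u G φ = jacobianPairing Ω
      (current (fun z => toComplex (u z)) (fun z => matrixToComplexCLM (G z))) φ := by
  rw [detPairing, jacobianPairing, ← integral_const_mul]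
  congr 1 with z
  simp [wedge_apply, current, matrixToComplexCLM_apply_single, lambdaVec]
  ring

section Current

variable {E : Type*} [NormedAddCommGroup E] [NormedSpace ℝ E] {v w : E → ℂ}
  {V : E → E →L[ℝ] ℂ} {a : E → E →L[ℝ] ℝ}

lemma current_phaseDeriv {z : E} (hw : ‖w z‖ = 1) (hv : ‖v z‖ = 1) :
    current (fun z => w z * v z) (phaseDeriv w a v V) z = current v V z + a z := by
  have hunit : ∀ c : ℂ, ‖c‖ = 1 → star c * c = 1 := fun c hc => by
    rw [Complex.star_def, Complex.conj_mul', hc]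
    norm_num
  ext e
  have hleibniz : star (w z * v z) * (w z * (V z e + (a z e : ℂ) * (Complex.I * v z))) =
      star (v z) * V z e + (a z e : ℂ) * Complex.I := by
    rw [star_mul']
    linear_combination (star (v z) * (V z e + a z e * (Complex.I * v z))) * hunit _ hw +
      (a z e * Complex.I) * hunit _ hv
  simp only [current, phaseDeriv, ContinuousLinearMap.comp_apply, smul_apply, add_apply,
    ContinuousLinearMap.smulRight_apply, Complex.imCLM_apply, smul_eq_mul, Complex.real_smul]
  rw [hleibniz, Complex.add_im, Complex.im_ofReal_mul, Complex.I_im, mul_one]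

lemma IsUnimodularW11.integrableOn_current [MeasureSpace E] {Ω : Set E}
    (h : IsUnimodularW11 Ω v V) : IntegrableOn (current v V) Ω := by
  exact (ContinuousLinearMap.compL ℝ E ℂ ℝ Complex.imCLM).integrable_comp
    (h.integrableOn_deriv.bdd_smul 1
      (continuous_star.comp_aestronglyMeasurable h.integrableOn.aestronglyMeasurable)
      (h.norm_eq_one.mono fun z hz => (norm_star _).trans_le hz.le))

end Current

lemma jacobianPairing_current_phaseDeriv {Ω : Set R2} (hΩ : IsOpen Ω) {v w : R2 → ℂ}
    {V : R2 → R2 →L[ℝ] ℂ} {a : R2 → R2 →L[ℝ] ℝ} (hv : IsUnimodularW11 Ω v V)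
    (hw : IsPhaseFactor Ω w a) {φ : R2 → ℝ} (hφ : MemLip0 Ω φ) :
    jacobianPairing Ω (current (fun z => w z * v z) (phaseDeriv w a v V)) φ =
      jacobianPairing Ω (current v V) φ + jacobianPairing Ω a φ := by
  obtain ⟨⟨L, hL⟩, h0⟩ := hφ
  have ha : ∀ᵐ z ∂volume.restrict Ω,
      current (fun z => w z * v z) (phaseDeriv w a v V) z - current v V z = a z := by
    filter_upwards [hw.norm_eq_one hv, hv.norm_eq_one] with z hwz hvz
    rw [current_phaseDeriv hwz hvz, add_sub_cancel_left]
  have hsub := jacobianPairing_sub (lipschitzWith_indicator hL h0)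
    (hw v V hv).integrableOn_current.integrable.integrableOn
    hv.integrableOn_current.integrable.integrableOn
  simp only [jacobianPairing_congr ha, jacobianPairing_indicator hΩ] at hsub
  rw [hsub, add_sub_cancel]

/-! ### Removing the tail of the singularities -/

lemma tendsto_integral_norm_sub_toComplex {Ω : Set R2} {u : R2 → R2}
    {G : R2 → Matrix (Fin 2) (Fin 2) ℝ} {v : ℕ → R2 → ℂ} {V : ℕ → R2 → R2 →L[ℝ] ℂ}
    (hu : IsUnimodularW11 Ω (fun z => toComplex (u z)) (fun z => matrixToComplexCLM (G z)))
    (hv : ∀ N, IsUnimodularW11 Ω (v N) (V N))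
    (h : Tendsto (fun N => ∫ z in Ω, (‖toComplex (u z) - v N z‖ +
      ‖matrixToComplexCLM (G z) - V N z‖)) atTop (𝓝 0)) :
    Tendsto (fun N => ∫ z in Ω, (‖u z - toComplex.symm (v N z)‖ +
      frob (G z - matrixToComplexCLM.symm (V N z)))) atTop (𝓝 0) := by
  refine squeeze_zero (fun N => integral_nonneg fun z =>
    add_nonneg (norm_nonneg _) (frob_nonneg _)) (fun N => ?_) (by simpa using h.const_mul 2)
  rw [← integral_const_mul]
  refine integral_mono_of_nonneg
    (ae_of_all _ fun z => add_nonneg (norm_nonneg _) (frob_nonneg _))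
    (((hu.integrableOn.sub (hv N).integrableOn).norm.add
      (hu.integrableOn_deriv.sub (hv N).integrableOn_deriv).norm).const_mul 2)
    (ae_of_all _ fun z => ?_)
  have hfrob := frob_le_two_mul_norm (G z - matrixToComplexCLM.symm (V N z))
  have hnorm : ‖u z - toComplex.symm (v N z)‖ = ‖toComplex (u z) - v N z‖ := by
    rw [← toComplex.norm_map, map_sub, LinearIsometryEquiv.apply_symm_apply]
  rw [map_sub, LinearEquiv.apply_symm_apply] at hfrob
  simp only [hnorm]
  linarith [norm_nonneg (toComplex (u z) - v N z)]

lemma exists_seq_detPairing_eq_add_tsum {Ω : Set R2} (hΩ : IsOpen Ω)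
    (hΩb : Bornology.IsBounded Ω) {u : R2 → R2} {G : R2 → Matrix (Fin 2) (Fin 2) ℝ}
    (hu : MemW11 Ω u G) (hS : SphereValued Ω u) {x y : ℕ → R2} (hx : ∀ i, x i ∈ closure Ω)
    (hy : ∀ i, y i ∈ closure Ω) (hs : Summable fun i => dist (x i) (y i)) :
    ∃ (u' : ℕ → R2 → R2) (G' : ℕ → R2 → Matrix (Fin 2) (Fin 2) ℝ),
      (∀ N, MemW11 Ω (u' N) (G' N) ∧ SphereValued Ω (u' N)) ∧
      (∀ N φ, MemLip0 Ω φ → detPairing Ω (u' N) (G' N) φ =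
        detPairing Ω u G φ + Real.pi * ∑' i, (φ (x (i + N)) - φ (y (i + N)))) ∧
      Tendsto (fun N => ∫ z in Ω, (‖u z - u' N z‖ + frob (G z - G' N z))) atTop (𝓝 0) := by
  have hv := memW11_and_sphereValued_iff.1 ⟨hu, hS⟩
  have hsN : ∀ N, Summable fun i => dist (x (i + N)) (y (i + N)) := fun N =>
    (summable_nat_add_iff (f := fun i => dist (x i) (y i)) N).2 hs
  have htail : ∀ N, IsPhaseFactor Ω (fun z => ∏' i, dipole (x (i + N)) (y (i + N)) z)
      (fun z => ∑' i, dipoleCurrent (x (i + N)) (y (i + N)) z) := fun N =>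
    isPhaseFactor_tprod_dipole (hsN N) hΩb
  have hlim := hv.tendsto_integral_sub_phaseDeriv_tail
    (fun i => isPhaseFactor_dipole (x i) (y i) hΩb)
    (fun i => (integrable_dipoleCurrent (x i) (y i)).integrableOn)
    (summable_setIntegral_norm_dipoleCurrent hs Ω)
    (ae_restrict_of_ae (ae_eventually_dipole_eq_one hs))
  refine ⟨fun N z => toComplex.symm ((∏' i, dipole (x (i + N)) (y (i + N)) z) * toComplex (u z)),
    fun N z => matrixToComplexCLM.symm (phaseDeriv
      (fun z => ∏' i, dipole (x (i + N)) (y (i + N)) z)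
      (fun z => ∑' i, dipoleCurrent (x (i + N)) (y (i + N)) z)
      (fun z => toComplex (u z)) (fun z => matrixToComplexCLM (G z)) z),
    fun N => memW11_and_sphereValued_iff.2 ?_, fun N φ hφ => ?_,
    tendsto_integral_norm_sub_toComplex hv (fun N => htail N _ _ hv) hlim⟩
  · simpa using htail N _ _ hv
  · have htsum := (hasSum_jacobianPairing_dipoleCurrent (hsN N) hΩ hΩb
      (fun _ => hx _) (fun _ => hy _) hφ).tsum_eq
    simp only [detPairing_eq_jacobianPairing, LinearIsometryEquiv.apply_symm_apply,
      LinearEquiv.apply_symm_apply]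
    rw [jacobianPairing_current_phaseDeriv hΩ hv (htail N) hφ, ← htsum, tsum_mul_left]

section LipschitzSeries

variable {α : Type*} [PseudoMetricSpace α] {s : Set α} {L : ℝ≥0} {φ : α → ℝ} {x y : ℕ → α}
  (hφ : LipschitzOnWith L φ s) (hx : ∀ i, x i ∈ s) (hy : ∀ i, y i ∈ s)
  (hs : Summable fun i => dist (x i) (y i))

include hφ hx hy hs

lemma summable_sub_of_lipschitzOnWith : Summable fun i => φ (x i) - φ (y i) :=
  (hs.mul_left (L : ℝ)).of_norm_bounded fun i => hφ.dist_le_mul _ (hx i) _ (hy i)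

lemma tsum_sub_le_of_lipschitzOnWith :
    ∑' i, (φ (x i) - φ (y i)) ≤ L * ∑' i, dist (x i) (y i) := by
  rw [← tsum_mul_left]
  exact (summable_sub_of_lipschitzOnWith hφ hx hy hs).tsum_le_tsum
    (fun i => (le_abs_self _).trans (hφ.dist_le_mul _ (hx i) _ (hy i))) (hs.mul_left _)

end LipschitzSeries

lemma flatNorm_congr {Ω : Set R2} {L : ℝ≥0} {F F' : (R2 → ℝ) → ℝ}
    (h : ∀ φ, MemLip0 Ω φ → F φ = F' φ) : flatNorm Ω L F = flatNorm Ω L F' :=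
  iSup_congr fun φ => iSup_congr fun hφ => congrArg ENNReal.ofReal (h φ ⟨⟨L, hφ.1⟩, hφ.2.1⟩)

lemma flatNorm_const_mul_tsum_sub_le {Ω : Set R2} {L : ℝ≥0} {x y : ℕ → R2}
    (hx : ∀ i, x i ∈ closure Ω) (hy : ∀ i, y i ∈ closure Ω)
    (hs : Summable fun i => dist (x i) (y i)) {c : ℝ} (hc : 0 ≤ c) :
    flatNorm Ω L (fun φ => c * ∑' i, (φ (x i) - φ (y i))) ≤
      ENNReal.ofReal (c * (L * ∑' i, dist (x i) (y i))) :=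
  iSup₂_le fun _ hφ => ENNReal.ofReal_le_ofReal
    (mul_le_mul_of_nonneg_left (tsum_sub_le_of_lipschitzOnWith hφ.1 hx hy hs) hc)

theorem density_finite_singular_points_general (Ω : Set R2) (hΩo : IsOpen Ω)
    (hΩb : Bornology.IsBounded Ω)
    (u : R2 → R2) (G : R2 → Matrix (Fin 2) (Fin 2) ℝ)
    (hu : MemW11 Ω u G) (hS : SphereValued Ω u)
    (x y : ℕ → R2)
    (hmem : ∀ i, x i ∈ closure Ω ∧ y i ∈ closure Ω)
    (hsum : Summable fun i => dist (x i) (y i))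
    (hrep : ∀ φ : R2 → ℝ, MemLip0 Ω φ →
      detPairing Ω u G φ = Real.pi * ∑' i, (φ (x i) - φ (y i))) :
    ∀ ε : ℝ, 0 < ε →
      ∃ (uε : R2 → R2) (Gε : R2 → Matrix (Fin 2) (Fin 2) ℝ) (Nε : ℕ),
        MemW11 Ω uε Gε ∧ SphereValued Ω uε ∧
        (∀ φ : R2 → ℝ, MemLip0 Ω φ →
          detPairing Ω uε Gε φ = Real.pi * ∑ i ∈ Finset.range Nε, (φ (x i) - φ (y i))) ∧
        ENNReal.ofReal (∫ z in Ω, (‖u z - uε z‖ + frob (G z - Gε z))) +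
            flatNorm Ω 1 (fun φ => detPairing Ω u G φ - detPairing Ω uε Gε φ) <
          ENNReal.ofReal ε := by
  intro ε hε
  choose hx hy using hmem
  obtain ⟨u', G', hmem', hdet, hlim⟩ := exists_seq_detPairing_eq_add_tsum hΩo hΩb hu hS hy hx
    (by simpa only [dist_comm] using hsum)
  have htail : Tendsto (fun N => Real.pi * (((1 : ℝ≥0) : ℝ) * ∑' i, dist (x (i + N)) (y (i + N))))
      atTop (𝓝 0) := by
    simpa using (tendsto_sum_nat_add fun i => dist (x i) (y i)).const_mul Real.pi
  obtain ⟨N, hN⟩ := ((hlim.add htail).eventually_lt_const (by simpa using hε)).exists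
  have hdiff : ∀ φ, MemLip0 Ω φ → detPairing Ω u G φ - detPairing Ω (u' N) (G' N) φ =
      Real.pi * ∑' i, (φ (x (i + N)) - φ (y (i + N))) := fun φ hφ => by
    rw [hdet N φ hφ, sub_add_cancel_left, ← mul_neg, ← tsum_neg]
    simp only [neg_sub]
  refine ⟨u' N, G' N, N, (hmem' N).1, (hmem' N).2, fun φ hφ => ?_, ?_⟩
  · obtain ⟨L, hL⟩ := hφ.1
    have hsplit := (summable_sub_of_lipschitzOnWith hL hx hy hsum).sum_add_tsum_nat_add N
    linear_combination hrep φ hφ - hdiff φ hφ - Real.pi * hsplit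
  · have hW11 : 0 ≤ ∫ z in Ω, (‖u z - u' N z‖ + frob (G z - G' N z)) :=
      integral_nonneg fun z => add_nonneg (norm_nonneg _) (frob_nonneg _)
    rw [flatNorm_congr hdiff]
    refine (add_le_add_right (flatNorm_const_mul_tsum_sub_le (fun i => hx _) (fun i => hy _)
      ((summable_nat_add_iff (f := fun i => dist (x i) (y i)) N).2 hsum) Real.pi_nonneg)
      _).trans_lt ?_
    rw [← ENNReal.ofReal_add hW11 (by positivity)]
    exact (ENNReal.ofReal_lt_ofReal_iff hε).2 hN

/-- **Lemma 5.2 (density: finite number of singular points).** If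
`Det(∇u) = π Σ_{i=1}^∞ (δ_{x_i} − δ_{y_i})` with `Σ|x_i − y_i| < ∞`, then for every
`ε > 0` there is `u_ε ∈ W^{1,1}(Ω;S¹)` whose Jacobian is the truncated sum
`π Σ_{i<N_ε} (δ_{x_i} − δ_{y_i})`, with `‖u−u_ε‖_{W^{1,1}} + ‖Det(∇u)−Det(∇u_ε)‖_flat < ε`. -/
theorem density_finite_singular_points (Ω : Set R2) (hΩo : IsOpen Ω)
    (hΩb : Bornology.IsBounded Ω) (hΩc : IsConnected Ω) (hΩl : HasLipschitzBoundary Ω)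
    (u : R2 → R2) (G : R2 → Matrix (Fin 2) (Fin 2) ℝ)
    (hu : MemW11 Ω u G) (hS : SphereValued Ω u)
    (x y : ℕ → R2)
    (hmem : ∀ i, x i ∈ closure Ω ∧ y i ∈ closure Ω ∧ x i ≠ y i)
    (hsum : Summable fun i => dist (x i) (y i))
    (hrep : ∀ φ : R2 → ℝ, MemLip0 Ω φ →
      Summable (fun i => φ (x i) - φ (y i)) ∧
      detPairing Ω u G φ = Real.pi * ∑' i, (φ (x i) - φ (y i))) :
    ∀ ε : ℝ, 0 < ε →
      ∃ (uε : R2 → R2) (Gε : R2 → Matrix (Fin 2) (Fin 2) ℝ) (Nε : ℕ),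
        MemW11 Ω uε Gε ∧ SphereValued Ω uε ∧
        (∀ φ : R2 → ℝ, MemLip0 Ω φ →
          detPairing Ω uε Gε φ = Real.pi * ∑ i ∈ Finset.range Nε, (φ (x i) - φ (y i))) ∧
        ENNReal.ofReal (∫ z in Ω, (‖u z - uε z‖ + frob (G z - Gε z))) +
            flatNorm Ω 1 (fun φ => detPairing Ω u G φ - detPairing Ω uε Gε φ) <
          ENNReal.ofReal ε :=
  density_finite_singular_points_general Ω hΩo hΩb u G hu hS x y
    (fun i => ⟨(hmem i).1, (hmem i).2.1⟩) hsum fun φ hφ => (hrep φ hφ).2
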